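/- arXiv:2206.11412 — 6 statements merged into one kernel-verified Lean document; each statement's English description precedes it below -/
import Mathlib

section
/- Skolem–Mahler–Lech theorem: Let u : ℕ → ℤ be an integer linear recurrence sequence, i.e., there exist d ≥ 1 and integers c₁, …, c_d with c_d ≠ 0 such that u(n+d) = c₁·u(n+d−1) + ⋯ + c_{d−1}·u(n+1) + c_d·u(n) for all n ∈ ℕ. Then the zero set {n ∈ ℕ : u(n) = 0} is semilinear: there exist a finite set F ⊆ ℕ and finitely many pairs (a₁,b₁), …, (a_k,b_k) ∈ ℕ × ℕ with each bᵢ ≥ 1 such that {n ∈ ℕ : u(n) = 0} = F ∪ ⋃_{i=1}^{k} {aᵢ + bᵢ·m : m ∈ ℕ}. -/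
/-!
Choose a prime `p` not dividing `c₀` and work over `ℤ_[p]`. In the finite free algebra
`ℤ_[p][X] / (χ)`, where `χ` is the characteristic polynomial of the recurrence, the class `x` of `X`
is a unit, and `u n = l (x ^ n)` for a linear functional `l`. Modulo `p ^ 5` the unit `x` has finite
order, so `x ^ N = 1 + p ^ 5 b` for some `N > 0`. Along each residue class modulo `N` the binomial
theorem then gives `u (r + N n) = ∑ₖ (n choose k) p ^ (5 k) wₖ` with `wₖ ∈ ℤ_[p]`. The right-hand
side is a power series in `n` which converges on a disc of radius greater than `3`, so by
compactness of `ℤ_[p]` it either vanishes on all of `ℤ_[p]` or has only finitely many zeros there.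
-/

open Finset Metric Polynomial
open scoped NNReal ENNReal Topology

section ZerosOfPowerSeries

/- The field may be totally disconnected, so the identity theorem on connected sets is of no use;
instead the series is recentred at an accumulation point of the zeros, and the factor `3` makes
the smaller disc around that point cover the closed ball. -/
theorem eqOn_zero_or_finite_zeros_closedBall {𝕜 E : Type*} [NontriviallyNormedField 𝕜]
    [ProperSpace 𝕜] [NormedAddCommGroup E] [NormedSpace 𝕜 E] [CompleteSpace E] {f : 𝕜 → E}
    {P : FormalMultilinearSeries 𝕜 𝕜 E} {x : 𝕜} {R : ℝ≥0∞} {ρ : ℝ≥0}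
    (hf : HasFPowerSeriesOnBall f P x R) (hρ : 3 * ρ < R) :
    Set.EqOn f 0 (closedBall x ρ) ∨ (closedBall x ρ ∩ f ⁻¹' {0}).Finite := by
  refine or_iff_not_imp_right.2 fun hinf => ?_
  obtain ⟨z, hz, hacc⟩ := Set.Infinite.exists_accPt_of_subset_isCompact hinf
    (isCompact_closedBall x ρ) Set.inter_subset_left
  rw [← closedEBall_coe] at hz ⊢
  have hzR : ‖z - x‖ₑ + 2 * ρ < R := by
    rw [← edist_eq_enorm_sub]
    refine lt_of_le_of_lt ?_ hρ
    grw [mem_closedEBall.1 hz]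
    exact le_of_eq (by ring)
  have hrecentred := hf.changeOrigin (le_self_add.trans_lt hzR)
  rw [add_sub_cancel] at hrecentred
  have hfreq : ∃ᶠ w in 𝓝[≠] z, f w = 0 :=
    (accPt_iff_frequently_nhdsNE.1 hacc).mono fun w hw => hw.2
  have hzero : ∀ᶠ w in 𝓝 z, f w = 0 :=
    hrecentred.analyticAt.frequently_zero_iff_eventually_zero.1 hfreq
  rw [hrecentred.hasFPowerSeriesAt.eq_zero_of_eventually hzero] at hrecentred
  intro w hw
  have hwz : w ∈ eball z (R - ‖z - x‖ₑ) := by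
    rw [mem_eball, lt_tsub_iff_left]
    refine lt_of_le_of_lt ?_ hzR
    grw [edist_triangle_right w z x, mem_closedEBall.1 hw, mem_closedEBall.1 hz, two_mul]
  exact (hrecentred.hasSum_sub hwz).unique hasSum_zero

end ZerosOfPowerSeries

section SumsOfPolynomials

theorem hasSum_coeff_mul_pow {R : Type*} [Semiring R] [TopologicalSpace R] (P : R[X]) (x : R) :
    HasSum (fun j => P.coeff j * x ^ j) (P.eval x) := by
  rw [eval_eq_sum]
  exact hasSum_sum_of_ne_finset_zero fun j hj => by simp [notMem_support_iff.1 hj]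

theorem hasFPowerSeriesOnBall_tsum_eval {𝕜 ι : Type*} [NontriviallyNormedField 𝕜]
    [CompleteSpace 𝕜] (P : ι → 𝕜[X]) {R : ℝ≥0} (hR : 0 < R)
    (hP : Summable fun x : ι × ℕ => ‖(P x.1).coeff x.2‖ * (R : ℝ) ^ x.2) :
    HasFPowerSeriesOnBall (fun z => ∑' i, (P i).eval z)
      (.ofScalars 𝕜 fun j => ∑' i, (P i).coeff j) 0 R where
  r_le := by
    have hcoeff (j : ℕ) : Summable fun i => ‖(P i).coeff j‖ :=
      (summable_mul_right_iff (pow_pos (NNReal.coe_pos.2 hR) j).ne').1 (hP.prod_symm.prod_factor j)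
    refine FormalMultilinearSeries.le_radius_of_summable_norm _ <|
      hP.prod_symm.prod.of_nonneg_of_le (fun j => by positivity) fun j => ?_
    simp only [FormalMultilinearSeries.ofScalars_norm, Prod.fst_swap, Prod.snd_swap, tsum_mul_right]
    gcongr
    exact norm_tsum_le_tsum_norm (hcoeff j)
  r_pos := by exact_mod_cast hR
  hasSum {y} hy := by
    have hyR : ‖y‖ ≤ R := by
      rw [eball_coe] at hy
      exact (mem_ball_zero_iff.1 hy).le
    have hsum : Summable fun x : ι × ℕ => (P x.1).coeff x.2 * y ^ x.2 :=
      hP.of_norm_bounded fun x => by rw [norm_mul, norm_pow]; gcongr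
    have heval : ∑' x : ι × ℕ, (P x.1).coeff x.2 * y ^ x.2 = ∑' i, (P i).eval y := by
      rw [hsum.tsum_prod]
      exact tsum_congr fun i => (hasSum_coeff_mul_pow (P i) y).tsum_eq
    simp only [FormalMultilinearSeries.ofScalars_apply_eq, smul_eq_mul, ← tsum_mul_right, zero_add,
      ← heval]
    exact ((Equiv.prodComm ℕ ι).hasSum_iff.2 hsum.hasSum).prod_fiberwise
      fun j => (hsum.prod_symm.prod_factor j).hasSum

end SumsOfPolynomials

section BinomialInterpolation

/-- The binomial coefficient `z(z - 1)⋯(z - k + 1) / k!` as a polynomial in `z`, which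
interpolates `n ↦ n.choose k`. It is meaningful only if `k!` is nonzero in `K`. -/
noncomputable def choosePoly (K : Type*) [Field K] (k : ℕ) : K[X] :=
  C (k.factorial : K)⁻¹ * descPochhammer K k

theorem choosePoly_eval_natCast {K : Type*} [Field K] [CharZero K] (k n : ℕ) :
    (choosePoly K k).eval (n : K) = n.choose k := by
  rw [choosePoly, eval_mul, eval_C, Nat.cast_choose_eq_descPochhammer_div, inv_mul_eq_div]

theorem coeff_choosePoly_of_lt {K : Type*} [Field K] {k j : ℕ} (h : k < j) :
    (choosePoly K k).coeff j = 0 := by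
  rw [choosePoly, coeff_C_mul,
    coeff_eq_zero_of_natDegree_lt ((descPochhammer_natDegree K k).trans_lt h), mul_zero]

variable {p : ℕ} [Fact p.Prime]

theorem norm_factorial_inv_le (k : ℕ) : ‖(k.factorial : ℚ_[p])⁻¹‖ ≤ (p : ℝ) ^ k := by
  have hp : (1 : ℝ) ≤ p := mod_cast (Fact.out : p.Prime).one_le
  rw [norm_inv, Padic.norm_eq_zpow_neg_valuation (mod_cast k.factorial_ne_zero),
    Padic.valuation_natCast, zpow_neg, inv_inv, zpow_natCast]
  exact pow_le_pow_right₀ hp (padicValNat_factorial_le p k)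

theorem norm_coeff_choosePoly_le (k j : ℕ) : ‖(choosePoly ℚ_[p] k).coeff j‖ ≤ (p : ℝ) ^ k := by
  have hint : ‖(descPochhammer ℚ_[p] k).coeff j‖ ≤ 1 := by
    rw [← descPochhammer_map (Int.castRingHom ℚ_[p]), coeff_map]
    exact Padic.norm_int_le_one _
  rw [choosePoly, coeff_C_mul, norm_mul]
  exact (mul_le_of_le_one_right (norm_nonneg _) hint).trans (norm_factorial_inv_le k)

/- Of the exponent `5 k`, one `k` absorbs the denominator `k!`, two give the radius `p ^ 2`, and
the other two make the double series summable. -/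
theorem summable_norm_coeff_mul_choosePoly {a : ℕ → ℚ_[p]}
    (ha : ∀ k, ‖a k‖ ≤ ((p : ℝ) ^ (5 * k))⁻¹) :
    Summable fun x : ℕ × ℕ =>
      ‖(C (a x.1) * choosePoly ℚ_[p] x.1).coeff x.2‖ * ((p : ℝ) ^ 2) ^ x.2 := by
  have hp : (1 : ℝ) < p := mod_cast (Fact.out : p.Prime).one_lt
  have hgeom : Summable fun k : ℕ => ((p : ℝ)⁻¹) ^ k :=
    summable_geometric_of_lt_one (by positivity) (inv_lt_one_of_one_lt₀ hp)
  refine (hgeom.mul_of_nonneg hgeom (fun _ => by positivity) fun _ => by positivity).of_nonneg_of_le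
    (fun _ => by positivity) ?_
  rintro ⟨k, j⟩
  rw [coeff_C_mul, norm_mul]
  rcases lt_or_ge k j with hkj | hjk
  · rw [coeff_choosePoly_of_lt hkj, norm_zero, mul_zero, zero_mul]
    positivity
  · calc ‖a k‖ * ‖(choosePoly ℚ_[p] k).coeff j‖ * ((p : ℝ) ^ 2) ^ j
        ≤ ((p : ℝ) ^ (5 * k))⁻¹ * (p : ℝ) ^ k * ((p : ℝ) ^ 2) ^ j := by
          gcongr
          exacts [ha k, norm_coeff_choosePoly_le k j]
      _ ≤ (p : ℝ)⁻¹ ^ k * (p : ℝ)⁻¹ ^ j := by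
          rw [inv_pow, inv_pow, ← mul_inv, mul_assoc, inv_mul_le_iff₀ (by positivity),
            le_mul_inv_iff₀ (by positivity)]
          simp only [← pow_mul, ← pow_add]
          exact pow_le_pow_right₀ hp.le (by omega)

theorem exists_hasFPowerSeriesOnBall_eq_sum_choose {a : ℕ → ℚ_[p]}
    (ha : ∀ k, ‖a k‖ ≤ ((p : ℝ) ^ (5 * k))⁻¹) :
    ∃ (f : ℚ_[p] → ℚ_[p]) (P : FormalMultilinearSeries ℚ_[p] ℚ_[p] ℚ_[p]),
      HasFPowerSeriesOnBall f P 0 ((p ^ 2 : ℝ≥0) : ℝ≥0∞) ∧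
      ∀ n : ℕ, f n = ∑ k ∈ range (n + 1), n.choose k * a k := by
  have hp : (0 : ℝ≥0) < p := mod_cast (Fact.out : p.Prime).pos
  refine ⟨_, _, hasFPowerSeriesOnBall_tsum_eval (fun k => C (a k) * choosePoly ℚ_[p] k)
    (pow_pos hp 2) (by simpa using summable_norm_coeff_mul_choosePoly ha), fun n => ?_⟩
  simp only [eval_mul, eval_C, choosePoly_eval_natCast, mul_comm (a _)]
  refine tsum_eq_sum fun k hk => ?_
  rw [Nat.choose_eq_zero_of_lt (by simpa using hk), Nat.cast_zero, zero_mul]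

theorem forall_sum_choose_eq_zero_or_finite {a : ℕ → ℚ_[p]}
    (ha : ∀ k, ‖a k‖ ≤ ((p : ℝ) ^ (5 * k))⁻¹) :
    (∀ n, ∑ k ∈ range (n + 1), n.choose k * a k = 0) ∨
      {n : ℕ | ∑ k ∈ range (n + 1), n.choose k * a k = 0}.Finite := by
  obtain ⟨f, P, hf, hfa⟩ := exists_hasFPowerSeriesOnBall_eq_sum_choose ha
  have hradius : 3 * ((1 : ℝ≥0) : ℝ≥0∞) < ((p ^ 2 : ℝ≥0) : ℝ≥0∞) := by
    have : 3 < p ^ 2 := by nlinarith [(Fact.out : p.Prime).two_le]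
    norm_cast
  have hmem (n : ℕ) : (n : ℚ_[p]) ∈ closedBall 0 ((1 : ℝ≥0) : ℝ) := by
    simpa using Padic.norm_int_le_one (p := p) n
  simp only [← hfa]
  refine (eqOn_zero_or_finite_zeros_closedBall hf hradius).imp (fun h n => h (hmem n)) fun h => ?_
  exact (h.preimage Nat.cast_injective.injOn).subset fun n hn => ⟨hmem n, hn⟩

end BinomialInterpolation

section PowersInFiniteAlgebras

theorem exists_pow_sub_one_mem_smul_top {R A : Type*} [CommRing R] [Ring A] [Algebra R A]
    [Module.Finite R A] (I : Ideal R) [Finite (R ⧸ I)] {x : A} (hx : IsUnit x) :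
    ∃ N, 0 < N ∧ x ^ N - 1 ∈ I • (⊤ : Submodule R A) := by
  have : Finite (A ⧸ I • (⊤ : Submodule R A)) :=
    Submodule.finite_quotient_smul I Module.Finite.fg_top
  obtain ⟨m, n, hmn, heq⟩ := Set.finite_univ.exists_lt_map_eq_of_forall_mem
    (f := fun n : ℕ => (I • (⊤ : Submodule R A)).mkQ (x ^ n)) fun _ => Set.mem_univ _
  obtain ⟨y, hy⟩ := (hx.pow m).exists_left_inv
  refine ⟨n - m, Nat.sub_pos_of_lt hmn, ?_⟩
  have hdiff : x ^ n - x ^ m ∈ I • (⊤ : Submodule R A) := (Submodule.Quotient.eq _).1 heq.symm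
  have hfactor : x ^ (n - m) - 1 = LinearMap.mulLeft R y (x ^ n - x ^ m) := by
    rw [LinearMap.mulLeft_apply, ← Nat.add_sub_of_le hmn.le, pow_add, ← mul_sub_one, ← mul_assoc,
      hy, one_mul, Nat.add_sub_cancel_left]
  rw [hfactor]
  exact Submodule.smul_top_le_comap_smul_top I (LinearMap.mulLeft R y) hdiff

theorem map_one_add_smul_pow {R A M : Type*} [CommSemiring R] [Semiring A] [Algebra R A]
    [AddCommMonoid M] [Module R M] (l : A →ₗ[R] M) (q : R) (b : A) (n : ℕ) :
    l ((1 + q • b) ^ n) = ∑ k ∈ range (n + 1), n.choose k • q ^ k • l (b ^ k) := by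
  rw [add_comm, (Commute.one_right _).add_pow, map_sum]
  refine sum_congr rfl fun k _ => ?_
  rw [one_pow, mul_one, _root_.smul_pow, ← nsmul_eq_mul', map_nsmul, map_smul]

variable {p : ℕ} [Fact p.Prime]

theorem finite_quotient_span_pow (n : ℕ) : Finite (ℤ_[p] ⧸ Ideal.span {(p : ℤ_[p]) ^ n}) := by
  have : NeZero (p ^ n) := ⟨pow_ne_zero n (Fact.out : p.Prime).ne_zero⟩
  rw [← PadicInt.ker_toZModPow]
  exact .of_injective _ (RingHom.kerLift_injective (PadicInt.toZModPow n))

variable {A : Type*} [Ring A] [Algebra ℤ_[p] A]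

theorem forall_map_one_add_smul_pow_eq_zero_or_finite (l : A →ₗ[ℤ_[p]] ℤ_[p]) (b : A) :
    (∀ n : ℕ, l ((1 + (p : ℤ_[p]) ^ 5 • b) ^ n) = 0) ∨
      {n : ℕ | l ((1 + (p : ℤ_[p]) ^ 5 • b) ^ n) = 0}.Finite := by
  let a (k : ℕ) : ℤ_[p] := ((p : ℤ_[p]) ^ 5) ^ k * l (b ^ k)
  have ha (k : ℕ) : ‖(a k : ℚ_[p])‖ ≤ ((p : ℝ) ^ (5 * k))⁻¹ := by
    simp only [a, PadicInt.padic_norm_e_of_padicInt, norm_mul, norm_pow, PadicInt.norm_p, inv_pow,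
      ← pow_mul]
    exact mul_le_of_le_one_right (by positivity) (PadicInt.norm_le_one _)
  have hl (n : ℕ) : l ((1 + (p : ℤ_[p]) ^ 5 • b) ^ n) = 0 ↔
      ∑ k ∈ range (n + 1), (n.choose k : ℚ_[p]) * a k = 0 := by
    rw [map_one_add_smul_pow, ← PadicInt.coe_eq_zero]
    simp [a]
  simpa only [hl] using forall_sum_choose_eq_zero_or_finite ha

theorem exists_forall_map_pow_eq_zero_or_finite [Module.Finite ℤ_[p] A] {x : A} (hx : IsUnit x)
    (l : A →ₗ[ℤ_[p]] ℤ_[p]) :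
    ∃ N, 0 < N ∧ ∀ r, (∀ n, l (x ^ (r + N * n)) = 0) ∨ {n | l (x ^ (r + N * n)) = 0}.Finite := by
  have := finite_quotient_span_pow (p := p) 5
  obtain ⟨N, hN, hmem⟩ := exists_pow_sub_one_mem_smul_top (Ideal.span {(p : ℤ_[p]) ^ 5}) hx
  rw [Submodule.ideal_span_singleton_smul] at hmem
  obtain ⟨b, -, hb⟩ := (Submodule.mem_smul_pointwise_iff_exists _ _ _).1 hmem
  refine ⟨N, hN, fun r => ?_⟩
  simpa [hb, pow_add, pow_mul] using
    forall_map_one_add_smul_pow_eq_zero_or_finite (l ∘ₗ LinearMap.mulLeft ℤ_[p] (x ^ r)) b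

end PowersInFiniteAlgebras

section RecurrenceSolutions

theorem isUnit_of_aeval_eq_zero {R A : Type*} [CommRing R] [Ring A] [Algebra R A] {x : A}
    {P : R[X]} (hP : aeval x P = 0) (h0 : IsUnit (P.coeff 0)) : IsUnit x := by
  have hx : x * aeval x P.divX = -algebraMap R A (P.coeff 0) := by
    rw [← X_mul_divX_add P, map_add, map_mul, aeval_X, aeval_C] at hP
    exact eq_neg_of_add_eq_zero_left hP
  have hcomm : Commute x (aeval x P.divX) := by
    simpa using (Commute.all X P.divX).map (aeval x)
  exact (hcomm.isUnit_mul_iff.1 (hx ▸ (h0.map (algebraMap R A)).neg)).1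

variable {R : Type*} [CommRing R] {E : LinearRecurrence R}

theorem isSolution_map_pow {A : Type*} [Ring A] [Algebra R A] {x : A}
    (hx : aeval x E.charPoly = 0) (l : A →ₗ[R] R) : E.IsSolution fun n => l (x ^ n) := fun n => by
  have hpow : x ^ E.order = ∑ i, E.coeffs i • x ^ (i : ℕ) := by
    simpa [LinearRecurrence.charPoly, aeval_monomial, sub_eq_zero, ← Algebra.smul_def] using hx
  simp only [pow_add, hpow, Finset.mul_sum, mul_smul_comm, map_sum, map_smul, smul_eq_mul]

theorem exists_map_root_pow_eq {u : ℕ → R} (hu : E.IsSolution u) :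
    ∃ l : AdjoinRoot E.charPoly →ₗ[R] R, ∀ n, l (AdjoinRoot.root E.charPoly ^ n) = u n := by
  nontriviality R
  let B := AdjoinRoot.powerBasis' E.charPoly_monic
  have hdim : B.dim = E.order := natDegree_eq_of_degree_eq_some E.charPoly_degree_eq_order
  let l := B.basis.constr R fun i => u i
  have hl : E.IsSolution fun n => l (AdjoinRoot.root E.charPoly ^ n) :=
    isSolution_map_pow ((AdjoinRoot.aeval_eq _).trans AdjoinRoot.mk_self) l
  refine ⟨l, congr_fun ((E.eq_iff_eqOn_range_order _ _ hl hu).2 fun i hi => ?_)⟩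
  have hiB : i < B.dim := hdim ▸ mem_range.1 hi
  have hli := B.basis.constr_basis R (fun i => u i) ⟨i, hiB⟩
  rwa [B.basis_eq_pow] at hli

theorem charPoly_coeff_zero {d : ℕ} (c : Fin (d + 1) → R) :
    (LinearRecurrence.mk (d + 1) c).charPoly.coeff 0 = -c 0 := by
  simp [LinearRecurrence.charPoly, coeff_monomial, Fin.val_eq_zero_iff]

theorem exists_forall_isSolution_eq_zero_or_finite {p : ℕ} [Fact p.Prime]
    {E : LinearRecurrence ℤ_[p]} (hE : IsUnit (E.charPoly.coeff 0)) {u : ℕ → ℤ_[p]}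
    (hu : E.IsSolution u) :
    ∃ N, 0 < N ∧ ∀ r, (∀ n, u (r + N * n) = 0) ∨ {n | u (r + N * n) = 0}.Finite := by
  have := E.charPoly_monic.finite_adjoinRoot
  have hroot : IsUnit (AdjoinRoot.root E.charPoly) :=
    isUnit_of_aeval_eq_zero ((AdjoinRoot.aeval_eq _).trans AdjoinRoot.mk_self) hE
  obtain ⟨l, hl⟩ := exists_map_root_pow_eq hu
  simpa only [hl] using exists_forall_map_pow_eq_zero_or_finite hroot l

end RecurrenceSolutions

theorem exists_eq_finset_union_progressions {S : Set ℕ} {N : ℕ} (hN : 0 < N)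
    (hS : ∀ r < N, (∀ n, r + N * n ∈ S) ∨ {n | r + N * n ∈ S}.Finite) :
    ∃ (F : Finset ℕ) (k : ℕ) (a b : Fin k → ℕ), (∀ i, 1 ≤ b i) ∧
      S = ↑F ∪ ⋃ i : Fin k, {n : ℕ | ∃ m : ℕ, n = a i + b i * m} := by
  classical
  let T : Finset ℕ := {r ∈ range N | ∀ n, r + N * n ∈ S}
  have hfin : {n ∈ S | n % N ∉ T}.Finite := by
    refine ((range N \ T).finite_toSet.biUnion (t := fun r => (r + N * ·) '' {n | r + N * n ∈ S})
      fun r hr => ?_).subset fun n hn => ?_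
    · obtain ⟨hrN, hrT⟩ : r < N ∧ r ∉ T := by simpa using hr
      exact ((hS r hrN).resolve_left fun h => hrT (by simp [T, hrN, h])).image _
    · exact Set.mem_biUnion (show n % N ∈ _ by simp [Nat.mod_lt n hN, hn.2])
        ⟨n / N, by simpa [Nat.mod_add_div] using hn.1, Nat.mod_add_div n N⟩
  have hmem (n : ℕ) : n % N ∈ T ↔ ∃ i m, n = T.orderEmbOfFin rfl i + N * m := by
    have hrange (r : ℕ) : r ∈ T ↔ ∃ i, T.orderEmbOfFin rfl i = r := by
      rw [← mem_coe, ← range_orderEmbOfFin T rfl, Set.mem_range]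
    constructor
    · intro h
      obtain ⟨i, hi⟩ := (hrange _).1 h
      exact ⟨i, n / N, by rw [hi, Nat.mod_add_div]⟩
    · rintro ⟨i, m, rfl⟩
      have hi := orderEmbOfFin_mem T rfl i
      have hlt : T.orderEmbOfFin rfl i < N := mem_range.1 (mem_filter.1 hi).1
      rwa [Nat.add_mul_mod_self_left, Nat.mod_eq_of_lt hlt]
  have hT (n : ℕ) (h : n % N ∈ T) : n ∈ S := by
    simpa [Nat.mod_add_div] using (mem_filter.1 h).2 (n / N)
  refine ⟨hfin.toFinset, T.card, T.orderEmbOfFin rfl, fun _ => N, fun _ => hN, ?_⟩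
  ext n
  simp only [Set.mem_union, Set.Finite.coe_toFinset, Set.mem_iUnion, Set.mem_ofPred_eq, ← hmem]
  grind

/-- **Skolem–Mahler–Lech theorem.**  If `u : ℕ → ℤ` satisfies an integer linear
recurrence of some order `d ≥ 1` (with the coefficient of `u n` nonzero), then its
zero set is the union of a finite set and finitely many full arithmetic progressions
`{a + b·m : m ∈ ℕ}` with `b ≥ 1`. -/
theorem skolem_mahler_lech (u : ℕ → ℤ)
    (hLRS : ∃ d : ℕ, ∃ c : Fin (d + 1) → ℤ, c 0 ≠ 0 ∧
      ∀ n : ℕ, u (n + (d + 1)) = ∑ j : Fin (d + 1), c j * u (n + (j : ℕ))) :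
    ∃ (F : Finset ℕ) (k : ℕ) (a b : Fin k → ℕ),
      (∀ i, 1 ≤ b i) ∧
      {n : ℕ | u n = 0} =
        ↑F ∪ ⋃ i : Fin k, {n : ℕ | ∃ m : ℕ, n = a i + b i * m} := by
  obtain ⟨d, c, hc, hrec⟩ := hLRS
  obtain ⟨p, hlt, hp⟩ := Nat.exists_infinite_primes ((c 0).natAbs + 1)
  have : Fact p.Prime := ⟨hp⟩
  have hpc : ¬ (p : ℤ) ∣ c 0 := fun h =>
    Nat.not_dvd_of_pos_of_lt (Int.natAbs_pos.2 hc) hlt (Int.natCast_dvd.1 h)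
  let E : LinearRecurrence ℤ_[p] := ⟨d + 1, fun j => c j⟩
  have hE : IsUnit (E.charPoly.coeff 0) := by
    rw [charPoly_coeff_zero, IsUnit.neg_iff, PadicInt.isUnit_iff]
    exact le_antisymm (PadicInt.norm_le_one _)
      (not_lt.1 ((PadicInt.norm_int_lt_one_iff_dvd _).not.2 hpc))
  have hu : E.IsSolution fun n => (u n : ℤ_[p]) := fun n => by
    simp [E, hrec]
  obtain ⟨N, hN, hzeros⟩ := exists_forall_isSolution_eq_zero_or_finite hE hu
  simp only [Int.cast_eq_zero] at hzeros
  exact exists_eq_finset_union_progressions hN fun r _ => hzeros r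
end

section
/- Let d ≥ 1, let M be a real d × d matrix, x ∈ ℝ^d, and let H = {y ∈ ℝ^d : c · y ≥ b} be a closed halfspace (where c ∈ ℝ^d and b ∈ ℝ). Then the following are equivalent: (i) for every ε > 0 there exists an ε-pseudo-orbit ⟨x_n⟩ of x under M such that x_n ∈ H for all n ∈ ℕ; (ii) Mⁿx ∈ H for all n ∈ ℕ. -/
/-!
At each fixed time `n`, continuity of the map forces the `n`-th terms of `ε`-pseudo-orbits to
converge, as `ε → 0`, to the `n`-th term of the genuine orbit; a closed set containing all the
former therefore contains the latter. Conversely, an orbit is an `ε`-pseudo-orbit for every `ε > 0`.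
-/

open Filter Function Matrix Topology

section PseudoOrbit

variable {X : Type*} [PseudoMetricSpace X]

/-- `u` is an `ε`-pseudo-orbit of `x` under `f`. The perturbation `d n = u (n + 1) - f (u n)` is
encoded by its size `dist (u (n + 1)) (f (u n))`, so that no linear structure is required. -/
def IsPseudoOrbit (f : X → X) (ε : ℝ) (x : X) (u : ℕ → X) : Prop :=
  u 0 = x ∧ ∀ n, dist (u (n + 1)) (f (u n)) < ε

lemma isPseudoOrbit_iterate (f : X → X) {ε : ℝ} (hε : 0 < ε) (x : X) :
    IsPseudoOrbit f ε x (f^[·] x) :=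
  ⟨rfl, fun n ↦ by simpa only [iterate_succ_apply', dist_self] using hε⟩

lemma tendsto_of_isPseudoOrbit {ι : Type*} {l : Filter ι} {f : X → X} {x : X} {ε : ι → ℝ}
    {u : ι → ℕ → X} (hf : Continuous f) (hε : Tendsto ε l (𝓝 0))
    (hu : ∀ᶠ i in l, IsPseudoOrbit f (ε i) x (u i)) (n : ℕ) :
    Tendsto (u · n) l (𝓝 (f^[n] x)) := by
  induction n with
  | zero => exact tendsto_const_nhds.congr' (hu.mono fun i hi ↦ hi.1.symm)
  | succ n ih =>
    have image_tendsto : Tendsto (fun i ↦ f (u i n)) l (𝓝 (f^[n + 1] x)) := by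
      rw [iterate_succ_apply']
      exact (hf.tendsto _).comp ih
    have error_tendsto : Tendsto (fun i ↦ dist (f (u i n)) (u i (n + 1))) l (𝓝 0) :=
      squeeze_zero' (.of_forall fun _ ↦ dist_nonneg)
        (hu.mono fun i hi ↦ (dist_comm _ _).trans_le (hi.2 n).le) hε
    exact image_tendsto.congr_dist error_tendsto

theorem pseudo_orbits_in_halfspace_iff_orbit_in_halfspace_general {f : X → X} {s : Set X}
    (hf : Continuous f) (hs : IsClosed s) (x : X) :
    (∀ ε : ℝ, 0 < ε → ∃ u : ℕ → X, IsPseudoOrbit f ε x u ∧ ∀ n, u n ∈ s) ↔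
      ∀ n, f^[n] x ∈ s := by
  refine ⟨fun h n ↦ ?_, fun h ε hε ↦ ⟨_, isPseudoOrbit_iterate f hε x, h⟩⟩
  choose u hu hus using fun k : ℕ ↦ h (1 / (k + 1)) Nat.one_div_pos_of_nat
  have u_tendsto : Tendsto (u · n) atTop (𝓝 (f^[n] x)) :=
    tendsto_of_isPseudoOrbit hf tendsto_one_div_add_atTop_nhds_zero_nat (.of_forall hu) n
  exact hs.mem_of_tendsto u_tendsto (.of_forall fun k ↦ hus k n)

end PseudoOrbit

lemma iterate_toLp_mulVec {R ι : Type*} [Semiring R] [Fintype ι] [DecidableEq ι]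
    {p : ENNReal} (M : Matrix ι ι R) (n : ℕ) (x : WithLp p (ι → R)) :
    (fun y ↦ WithLp.toLp p (M *ᵥ y.ofLp))^[n] x = WithLp.toLp p ((M ^ n) *ᵥ x.ofLp) := by
  induction n with
  | zero => simp
  | succ n ih => rw [iterate_succ_apply', ih, mulVec_mulVec, pow_succ']

lemma isClosed_halfspace {ι : Type*} [Fintype ι] {p : ENNReal} (c : ι → ℝ) (b : ℝ) :
    IsClosed {y : PiLp p fun _ : ι ↦ ℝ | b ≤ ∑ i, c i * y i} :=
  isClosed_le continuous_const (by fun_prop)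

/-- For a closed halfspace `H = {y : c ⬝ y ≥ b}`, every `ε > 0` admits an
`ε`-pseudo-orbit of `x` under `M` remaining in `H` iff the genuine orbit of `x`
under `M` remains in `H`.  Here the norm is the Euclidean norm on `ℝ^d`. -/
theorem pseudo_orbits_in_halfspace_iff_orbit_in_halfspace
    (d : ℕ) (hd : 1 ≤ d)
    (M : Matrix (Fin d) (Fin d) ℝ) (x : EuclideanSpace ℝ (Fin d))
    (c : EuclideanSpace ℝ (Fin d)) (b : ℝ) :
    (∀ ε : ℝ, 0 < ε → ∃ xs : ℕ → EuclideanSpace ℝ (Fin d),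
        xs 0 = x ∧
        (∀ n : ℕ, ‖xs (n + 1) -
            (WithLp.equiv 2 (Fin d → ℝ)).symm (M.mulVec (xs n))‖ < ε) ∧
        (∀ n : ℕ, b ≤ ∑ i, c i * xs n i)) ↔
      (∀ n : ℕ, b ≤ ∑ i, c i * ((M ^ n).mulVec x) i) := by
  simpa only [IsPseudoOrbit, dist_eq_norm, and_assoc, Set.mem_ofPred_eq, iterate_toLp_mulVec,
    WithLp.equiv_symm_apply] using
    pseudo_orbits_in_halfspace_iff_orbit_in_halfspace_general
      (f := fun y ↦ WithLp.toLp 2 (M *ᵥ y.ofLp)) (by fun_prop) (isClosed_halfspace c b) x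
end

section
/- Let d ≥ 2 and let P be a polynomial with integer coefficients in d − 1 variables Y₁, …, Y_{d−1}. Then the following are equivalent: (i) there exist pairwise distinct natural numbers m₁, …, m_{d−1} with P(m₁, …, m_{d−1}) = 0; (ii) there exist real numbers y₁, …, y_{d−1} with P(y₁, …, y_{d−1}) = 0 such that the set {n ∈ ℕ : (n − y₁)(n − y₂)⋯(n − y_{d−1}) = 0} has at least d − 1 elements. -/
/-!
The zero set of `∏ i, (n - y i)` is the range of `y`, which has at most as many elements as `y` has
coordinates. If it contains that many naturals, then by counting the coordinates of `y` are pairwise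
distinct and all of them are naturals.
-/

theorem prod_sub_eq_zero_iff_mem_range {ι R : Type*} [Fintype ι] [CommRing R] [IsDomain R]
    {x : R} {y : ι → R} : ∏ i, (x - y i) = 0 ↔ x ∈ Set.range y := by
  simp only [Finset.prod_eq_zero_iff, Finset.mem_univ, true_and, sub_eq_zero, Set.mem_range,
    eq_comm (a := x)]

theorem exists_injective_comp_eq_iff {ι κ α : Type*} [Fintype ι] {c : κ → α}
    (hc : Function.Injective c) {y : ι → α} :
    (∃ m : ι → κ, Function.Injective m ∧ c ∘ m = y) ↔
      ∃ s : Finset κ, Fintype.card ι ≤ s.card ∧ ∀ n ∈ s, c n ∈ Set.range y := by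
  classical
  constructor
  · rintro ⟨m, hm, rfl⟩
    refine ⟨Finset.univ.image m, (Finset.card_image_of_injective _ hm).ge, fun n hn => ?_⟩
    obtain ⟨i, -, rfl⟩ := Finset.mem_image.1 hn
    exact Set.mem_range_self i
  · rintro ⟨s, hs, hsy⟩
    have himage_subset : s.image c ⊆ Finset.univ.image y := by
      simpa [Finset.image_subset_iff] using hsy
    have hcard_le : Fintype.card ι ≤ (s.image c).card :=
      hs.trans_eq (Finset.card_image_of_injective s hc).symm
    have hy : Function.Injective y := by
      have hcard : (Finset.univ.image y).card = (Finset.univ : Finset ι).card :=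
        Finset.card_image_le.antisymm (hcard_le.trans (Finset.card_le_card himage_subset))
      simpa using Finset.card_image_iff.1 hcard
    have himage : s.image c = Finset.univ.image y :=
      Finset.eq_of_subset_of_card_le himage_subset (Finset.card_image_le.trans hcard_le)
    have hpreimage : ∀ i, ∃ n, c n = y i := fun i => by
      obtain ⟨n, -, hn⟩ :=
        Finset.mem_image.1 (himage ▸ Finset.mem_image_of_mem y (Finset.mem_univ i))
      exact ⟨n, hn⟩
    choose m hm using hpreimage
    have hcm : c ∘ m = y := funext hm
    exact ⟨m, Function.Injective.of_comp (hcm ▸ hy), hcm⟩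

theorem aeval_natCast_eq_zero_iff {σ A : Type*} (R : Type*) [CommSemiring A] [CommSemiring R]
    [Algebra A R] [FaithfulSMul A R] (m : σ → ℕ) (P : MvPolynomial σ A) :
    MvPolynomial.aeval (fun i => (m i : R)) P = 0 ↔
      MvPolynomial.eval (fun i => (m i : A)) P = 0 := by
  simpa [Function.comp_def, MvPolynomial.aeval_eq_eval] using
    MvPolynomial.aeval_algebraMap_eq_zero_iff_of_injective R (x := fun i => (m i : A)) (p := P)
      (FaithfulSMul.algebraMap_injective A R)

theorem distinct_nat_root_iff_general {ι A : Type*} (R : Type*) [Fintype ι] [CommSemiring A]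
    [CommRing R] [IsDomain R] [CharZero R] [Algebra A R] [FaithfulSMul A R]
    (P : MvPolynomial ι A) :
    (∃ m : ι → ℕ, Function.Injective m ∧ MvPolynomial.eval (fun i => (m i : A)) P = 0) ↔
      ∃ y : ι → R, MvPolynomial.aeval y P = 0 ∧
        ∃ s : Finset ℕ, Fintype.card ι ≤ s.card ∧ ∀ n ∈ s, ∏ i, ((n : R) - y i) = 0 := by
  simp only [prod_sub_eq_zero_iff_mem_range,
    ← exists_injective_comp_eq_iff (Nat.cast_injective (R := R))]
  constructor
  · rintro ⟨m, hm, hP⟩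
    exact ⟨_, (aeval_natCast_eq_zero_iff R m P).2 hP, m, hm, rfl⟩
  · rintro ⟨_, hP, m, hm, rfl⟩
    exact ⟨m, hm, (aeval_natCast_eq_zero_iff R m P).1 hP⟩

/-- Reduction from the distinct-naturals variant of Hilbert's tenth problem:
`P` has a root in pairwise distinct natural numbers iff `P` has a real root
`(y₁, …, y_{d−1})` such that `{n ∈ ℕ : (n − y₁)⋯(n − y_{d−1}) = 0}` has at least
`d − 1` elements. -/
theorem distinct_nat_root_iff (d : ℕ) (hd : 2 ≤ d)
    (P : MvPolynomial (Fin (d - 1)) ℤ) :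
    (∃ m : Fin (d - 1) → ℕ, Function.Injective m ∧
        MvPolynomial.eval (fun i => (m i : ℤ)) P = 0) ↔
      (∃ y : Fin (d - 1) → ℝ, MvPolynomial.aeval y P = 0 ∧
        ∃ s : Finset ℕ, d - 1 ≤ s.card ∧ ∀ n ∈ s, ∏ i, ((n : ℝ) - y i) = 0) := by
  simpa using distinct_nat_root_iff_general ℝ P
end

section
/- Let λ = c + d·i be a complex number with c² + d² = 1 (c, d real), let r ∈ ℝ, let M be the real 4 × 4 matrix with rows (c, −d, 1, 0), (d, c, 0, 1), (0, 0, c, −d), (0, 0, d, c), and let x = (1, 1, 1, 1) ∈ ℝ⁴. Define p(x₁, x₂, x₃, x₄) = (r/2)·(x₄ − x₃) − ((x₁ − x₃) / (Re(λ⁻¹)·x₃ − Im(λ⁻¹)·x₄))·(1 − (x₃ + x₄)/2). Then for every n ≥ 1 such that Re(λ^{n−1}) ≠ Im(λ^{n−1}), one has p(Mⁿx) = r·Im(λⁿ) − n·(1 − Re(λⁿ)). -/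
/-!
Identify `ℝ⁴` with `ℂ²` by `(x₁, x₂, x₃, x₄) ↦ (x₁ + i x₂, x₃ + i x₄)`. The matrix `M` becomes the
Jordan block `(z, w) ↦ (λ z + w, λ w)`, whose `n`-th power is
`(z, w) ↦ (λⁿ z + n λⁿ⁻¹ w, λⁿ w)`. On the orbit of `(w, w)` the difference `x₁ - x₃` is therefore
`Re (n λⁿ⁻¹ w)`, while `Re(λ⁻¹) x₃ - Im(λ⁻¹) x₄` is `Re (λ⁻¹ λⁿ w) = Re (λⁿ⁻¹ w)`: the quotient in
`p` recovers the time `n`. For `w = 1 + i`, multiplication by `w` sends `λⁿ` to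
`(Re λⁿ - Im λⁿ) + i (Re λⁿ + Im λⁿ)`, so half the difference and half the sum of the last two
coordinates are `Im λⁿ` and `Re λⁿ`.
-/

open Matrix

/-- The vector of `ℝ⁴` representing `(z, w) ∈ ℂ²`, used to read the orbits of `M` in complex
coordinates. Real and imaginary parts are interleaved, to match the `2 × 2` blocks of `M`. -/
def realCoords (z w : ℂ) : Fin 4 → ℝ := ![z.re, z.im, w.re, w.im]

/-- The real form of the complex Jordan block of size two with eigenvalue `l`: the matrix `M` of the
construction, with `2 × 2` real blocks for multiplication by `l` and by `1`. -/
def realJordanBlock (l : ℂ) : Matrix (Fin 4) (Fin 4) ℝ :=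
  !![l.re, -l.im, 1, 0; l.im, l.re, 0, 1; 0, 0, l.re, -l.im; 0, 0, l.im, l.re]

/-- The function `p` of the construction, as a function on `ℝ⁴`; the coordinates `x₁, …, x₄` are
`v 0, …, v 3`. -/
noncomputable def targetFunction (r : ℝ) (l : ℂ) (v : Fin 4 → ℝ) : ℝ :=
  r / 2 * (v 3 - v 2)
    - (v 0 - v 2) / ((l⁻¹).re * v 2 - (l⁻¹).im * v 3) * (1 - (v 2 + v 3) / 2)

theorem realJordanBlock_mulVec_realCoords (l z w : ℂ) :
    realJordanBlock l *ᵥ realCoords z w = realCoords (l * z + w) (l * w) := by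
  ext i
  fin_cases i <;>
    simp [realJordanBlock, realCoords, mulVec, dotProduct, Fin.sum_univ_four] <;> ring

theorem realJordanBlock_pow_mulVec_realCoords (l z w : ℂ) (n : ℕ) :
    (realJordanBlock l ^ n) *ᵥ realCoords z w =
      realCoords (l ^ n * z + n * l ^ (n - 1) * w) (l ^ n * w) := by
  induction n generalizing z w with
  | zero => simp
  | succ n ih =>
    have nilpotent_part : (n : ℂ) * l ^ (n - 1) * l = n * l ^ n := by
      cases n <;> simp [pow_succ, mul_assoc]
    rw [pow_succ, ← mulVec_mulVec, realJordanBlock_mulVec_realCoords, ih, Nat.add_sub_cancel]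
    congr 1
    · push_cast
      linear_combination w * nilpotent_part
    · ring

theorem re_sub_re_div_eq_natCast {l : ℂ} (hl : l ≠ 0) {n : ℕ} (hn : n ≠ 0) {w : ℂ}
    (hw : (l ^ (n - 1) * w).re ≠ 0) :
    ((l ^ n * w + n * l ^ (n - 1) * w).re - (l ^ n * w).re) /
      ((l⁻¹).re * (l ^ n * w).re - (l⁻¹).im * (l ^ n * w).im) = n := by
  have denominator : l⁻¹ * (l ^ n * w) = l ^ (n - 1) * w := by
    rw [← mul_pow_sub_one hn l, mul_assoc, inv_mul_cancel_left₀ hl]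
  rw [← Complex.mul_re, denominator, Complex.add_re, add_sub_cancel_left, mul_assoc,
    ← Complex.ofReal_natCast, Complex.re_ofReal_mul, mul_div_cancel_right₀ _ hw]

theorem targetFunction_realJordanBlock_pow_mulVec {l : ℂ} (hl : l ≠ 0) (r : ℝ) {n : ℕ}
    (hn : n ≠ 0) {w : ℂ} (hw : (l ^ (n - 1) * w).re ≠ 0) :
    targetFunction r l ((realJordanBlock l ^ n) *ᵥ realCoords w w) =
      r / 2 * ((l ^ n * w).im - (l ^ n * w).re)
        - n * (1 - ((l ^ n * w).re + (l ^ n * w).im) / 2) := by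
  rw [realJordanBlock_pow_mulVec_realCoords, ← re_sub_re_div_eq_natCast hl hn hw]
  rfl

theorem semialgebraic_target_formula_general {l : ℂ} (hl : l ≠ 0) (r : ℝ) {n : ℕ} (hn : n ≠ 0)
    (hne : (l ^ (n - 1)).re ≠ (l ^ (n - 1)).im) :
    targetFunction r l ((realJordanBlock l ^ n) *ᵥ ![1, 1, 1, 1]) =
      r * (l ^ n).im - n * (1 - (l ^ n).re) := by
  have start : (![1, 1, 1, 1] : Fin 4 → ℝ) = realCoords (1 + Complex.I) (1 + Complex.I) := by
    simp [realCoords]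
  have re_mul (z : ℂ) : (z * (1 + Complex.I)).re = z.re - z.im := by simp
  have im_mul (z : ℂ) : (z * (1 + Complex.I)).im = z.re + z.im := by simp
  rw [start, targetFunction_realJordanBlock_pow_mulVec hl r hn (by rwa [re_mul, sub_ne_zero]),
    re_mul, im_mul]
  ring

/-- For `λ = c + d·i` of modulus 1, `r ∈ ℝ`, with `M` and `x = (1,1,1,1)` as in
the Diophantine-hardness construction, and
`p(x₁,x₂,x₃,x₄) = (r/2)(x₄ − x₃) − ((x₁ − x₃)/(Re(λ⁻¹)x₃ − Im(λ⁻¹)x₄))(1 − (x₃+x₄)/2)`,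
one has `p(Mⁿx) = r·Im(λⁿ) − n(1 − Re(λⁿ))` for `n ≥ 1` with
`Re(λ^{n−1}) ≠ Im(λ^{n−1})`. -/
theorem semialgebraic_target_formula (c d r : ℝ) (h : c ^ 2 + d ^ 2 = 1)
    (l : ℂ) (hl : l = (c : ℂ) + (d : ℂ) * Complex.I)
    (M : Matrix (Fin 4) (Fin 4) ℝ)
    (hM : M = !![c, -d, 1, 0; d, c, 0, 1; 0, 0, c, -d; 0, 0, d, c])
    (x : Fin 4 → ℝ) (hx : x = ![1, 1, 1, 1])
    (p : ℝ → ℝ → ℝ → ℝ → ℝ)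
    (hp : ∀ x₁ x₂ x₃ x₄ : ℝ, p x₁ x₂ x₃ x₄ =
      (r / 2) * (x₄ - x₃)
        - ((x₁ - x₃) / ((l⁻¹).re * x₃ - (l⁻¹).im * x₄)) * (1 - (x₃ + x₄) / 2))
    (n : ℕ) (hn : 1 ≤ n)
    (hne : (l ^ (n - 1)).re ≠ (l ^ (n - 1)).im) :
    p ((M ^ n).mulVec x 0) ((M ^ n).mulVec x 1)
        ((M ^ n).mulVec x 2) ((M ^ n).mulVec x 3)
      = r * (l ^ n).im - (n : ℝ) * (1 - (l ^ n).re) := by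
  have l_ne_zero : l ≠ 0 :=
    Complex.normSq_pos.mp (by rw [hl, Complex.normSq_add_mul_I, h]; exact one_pos)
  rw [hp, hx, show M = realJordanBlock l by simp [hM, hl, realJordanBlock]]
  exact semialgebraic_target_formula_general l_ne_zero r (Nat.one_le_iff_ne_zero.mp hn) hne
end

section
/- Let d ≥ 1, let M be a d × d matrix with rational entries, let x ∈ ℚ^d, and let q ∈ ℚ[X₁, …, X_d] be a polynomial in d variables with rational coefficients. Then the set {n ∈ ℕ : q(Mⁿx) = 0} is semilinear: there exist a finite set F ⊆ ℕ and finitely many pairs (a₁,b₁), …, (a_k,b_k) ∈ ℕ × ℕ with each bᵢ ≥ 1 such that {n ∈ ℕ : q(Mⁿx) = 0} = F ∪ ⋃_{i=1}^{k} {aᵢ + bᵢ·m : m ∈ ℕ}. -/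
/-!
Substituting `M` into polynomials of bounded degree is a linear endomorphism `T`, and `q(Mⁿx)` is
`Λ(Tⁿ)` for a linear functional `Λ`; after clearing denominators `T` is integral over `ℤ`. Choose
an odd prime `p` not dividing the constant term of a monic annihilator of `T`, stripped of its
factor `X ^ r`. Modulo `p` the invertible part of `T` has finite order `N`, so for `a ≥ r` the
`k`-th difference at `0` of `f(m) = Λ(T^(a + N m))` is divisible by `p ^ k`.

In the Newton series of `f` the binomial coefficients then come with factors `p ^ k / k!`, whose
`p`-adic valuation is at least `k / 2`. Modulo `p ^ w` the series is therefore a polynomial of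
degree less than `2 w`, and `2 w` zeros of `f` force `p ^ w ∣ f(m)` for every `m`: polynomials
with roots `m₁, …, mₛ` are divisible by the monic polynomial `∏ (X - mᵢ)`, which keeps its degree
modulo `p ^ w`. So on each progression `a + N m` the zero set is finite or everything.
-/

open Filter fwdDiff

/-- A set of natural numbers is eventually periodic if translation by some positive `N` preserves
membership from some point on; these are the semilinear subsets of `ℕ`. -/
def IsEventuallyPeriodic (S : Set ℕ) : Prop :=
  ∃ N > 0, ∀ᶠ n in atTop, n + N ∈ S ↔ n ∈ S

namespace IsEventuallyPeriodic

variable {S : Set ℕ}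

theorem exists_eq_finset_union_progressions (hS : IsEventuallyPeriodic S) :
    ∃ (F : Finset ℕ) (k : ℕ) (a b : Fin k → ℕ),
      (∀ i, 1 ≤ b i) ∧ S = ↑F ∪ ⋃ i : Fin k, {n : ℕ | ∃ m : ℕ, n = a i + b i * m} := by
  classical
  obtain ⟨N, hN, h⟩ := hS
  obtain ⟨n₀, hn₀⟩ := eventually_atTop.1 h
  have mem_add_mul {n : ℕ} (hn : n₀ ≤ n) (m : ℕ) : n + N * m ∈ S ↔ n ∈ S := by
    induction m with
    | zero => simp
    | succ m ih => rw [Nat.mul_succ, ← add_assoc, hn₀ _ (by omega), ih]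
  let start := (Finset.Ico n₀ (n₀ + N)).filter (· ∈ S)
  refine ⟨(Finset.range n₀).filter (· ∈ S), start.card, fun i ↦ start.equivFin.symm i,
    fun _ ↦ N, fun _ ↦ hN, ?_⟩
  ext n
  simp only [Finset.coe_filter, Finset.mem_range, Set.mem_union, Set.mem_ofPred_eq, Set.mem_iUnion]
  constructor
  · intro hn
    refine (lt_or_ge n n₀).imp (fun hlt ↦ ⟨hlt, hn⟩) fun hle ↦ ?_
    have hdecomp : n = n₀ + (n - n₀) % N + N * ((n - n₀) / N) := by
      have := Nat.mod_add_div (n - n₀) N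
      omega
    have hstart : n₀ + (n - n₀) % N ∈ start := by
      have hlt := Nat.mod_lt (n - n₀) hN
      have hmem := (mem_add_mul (Nat.le_add_right _ _) _).1 (hdecomp ▸ hn)
      simp only [start, Finset.mem_filter, Finset.mem_Ico]
      exact ⟨⟨by omega, by omega⟩, hmem⟩
    exact ⟨start.equivFin ⟨_, hstart⟩, _, by simpa using hdecomp⟩
  · rintro (⟨-, hn⟩ | ⟨i, m, rfl⟩)
    · exact hn
    · have hi := (start.equivFin.symm i).2
      simp only [start, Finset.mem_filter, Finset.mem_Ico] at hi
      exact (mem_add_mul hi.1.1 m).2 hi.2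

theorem of_progressions {N : ℕ} (hN : 0 < N)
    (h : ∀ᶠ a in atTop, {m | a + N * m ∈ S}.Finite ∨ {m | a + N * m ∈ S} = Set.univ) :
    IsEventuallyPeriodic S := by
  obtain ⟨r, hr⟩ := eventually_atTop.1 h
  have const_on_progression (a : ℕ) (ha : r ≤ a) :
      ∀ᶠ m in atTop, a + N * m + N ∈ S ↔ a + N * m ∈ S := by
    simp only [add_assoc, ← Nat.mul_succ]
    obtain hfin | huniv := hr a ha
    · have hout : ∀ᶠ m in atTop, a + N * m ∉ S := by
        simpa [Nat.cofinite_eq_atTop] using hfin.eventually_cofinite_notMem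
      filter_upwards [hout, (tendsto_add_atTop_nat 1).eventually hout] with m hm hm'
      exact iff_of_false hm' hm
    · have hin (m : ℕ) : a + N * m ∈ S := huniv.ge (Set.mem_univ m)
      exact .of_forall fun m ↦ iff_of_true (hin (m + 1)) (hin m)
  have hall : ∀ᶠ m in atTop, ∀ i ∈ Finset.range N, r + i + N * m + N ∈ S ↔ r + i + N * m ∈ S :=
    (Finset.eventually_all _).2 fun i _ ↦ const_on_progression _ (Nat.le_add_right r i)
  have hdiv : Tendsto (fun n ↦ (n - r) / N) atTop atTop :=
    (Nat.tendsto_div_const_atTop hN.ne').comp (tendsto_sub_atTop_nat r)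
  refine ⟨N, hN, ?_⟩
  filter_upwards [hdiv.eventually hall, eventually_ge_atTop r] with n hn hrn
  have hdecomp : r + (n - r) % N + N * ((n - r) / N) = n := by
    rw [add_assoc, Nat.mod_add_div]
    exact Nat.add_sub_of_le hrn
  have hperiod := hn ((n - r) % N) (Finset.mem_range.2 (Nat.mod_lt _ hN))
  rwa [hdecomp] at hperiod

end IsEventuallyPeriodic

section Polynomial

open Polynomial

theorem map_eq_zero_of_degree_map_lt_card_roots {R S : Type*} [CommRing R] [IsDomain R]
    [CommRing S] {φ : R →+* S} {P : R[X]} {s : Finset R} (hs : ∀ x ∈ s, P.IsRoot x)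
    (hdeg : (P.map φ).degree < s.card) : P.map φ = 0 := by
  nontriviality S
  by_contra hne
  let W : R[X] := (s.val.map fun x ↦ X - C x).prod
  have hP : P ≠ 0 := by rintro rfl; simp at hne
  have hWP : W ∣ P := (Multiset.prod_X_sub_C_dvd_iff_le_roots hP _).2 <|
    (Multiset.le_iff_subset s.nodup).2 fun x hx ↦ (mem_roots hP).2 (hs x hx)
  have hW : W.Monic := monic_multisetProd_X_sub_C _
  have hWdeg : W.degree = s.card := by
    rw [degree_eq_natDegree hW.ne_zero, natDegree_multiset_prod_X_sub_C_eq_card, Finset.card_val]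
  refine (hW.map φ).not_dvd_of_degree_lt hne ?_ (Polynomial.map_dvd φ hWP)
  rwa [hW.degree_map, hWdeg]

theorem exists_coprime_mul_pow_eq_factorial_mul {p : ℕ} (hp : p.Prime) (hp2 : p ≠ 2) (K : ℕ) :
    ∃ u : ℕ, u.Coprime p ∧ ∀ k ≤ K, ∃ e, u * p ^ k = k.factorial * e ∧ p ^ (k / 2) ∣ e := by
  have : Fact p.Prime := ⟨hp⟩
  refine ⟨ordCompl[p] K.factorial, (Nat.coprime_ordCompl hp K.factorial_ne_zero).symm,
    fun k hk ↦ ?_⟩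
  set v := k.factorial.factorization p with hv
  have hvk : v ≤ k / 2 := by
    have hlegendre := sub_one_mul_padicValNat_factorial (p := p) k
    rw [← Nat.factorization_def _ hp, ← hv] at hlegendre
    have : 2 * v ≤ (p - 1) * v := Nat.mul_le_mul_right v (by have := hp.two_le; omega)
    omega
  obtain ⟨w, hw⟩ := Nat.ordCompl_dvd_ordCompl_of_dvd (Nat.factorial_dvd_factorial hk) p
  refine ⟨p ^ (k - v) * w, ?_, (pow_dvd_pow p (by omega)).mul_right w⟩
  calc ordCompl[p] K.factorial * p ^ k
      = (p ^ v * ordCompl[p] k.factorial) * (p ^ (k - v) * w) := by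
        rw [hw, ← Nat.add_sub_of_le (hvk.trans (Nat.div_le_self k 2)), pow_add,
          Nat.add_sub_cancel_left]
        ring
    _ = k.factorial * (p ^ (k - v) * w) := by rw [Nat.ordProj_mul_ordCompl_eq_self]

theorem eval_sum_descPochhammer_eq_mul {R : Type*} [CommRing R] {f : ℕ → R} {K : ℕ} {u : R}
    {e : ℕ → R} (he : ∀ k ≤ K, u * (Δ_[1])^[k] f 0 = k.factorial * e k) {m : ℕ} (hm : m ≤ K) :
    (∑ k ∈ Finset.range (K + 1), C (e k) * descPochhammer R k).eval (m : R) = u * f m := by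
  have hterm (k : ℕ) (hk : k ≤ K) :
      (C (e k) * descPochhammer R k).eval (m : R) = u * (m.choose k • (Δ_[1])^[k] f 0) := by
    rw [eval_mul, eval_C, descPochhammer_eval_eq_descFactorial,
      Nat.descFactorial_eq_factorial_mul_choose, nsmul_eq_mul, mul_left_comm u, he k hk]
    push_cast
    ring
  have hnewton : f m = ∑ k ∈ Finset.range (m + 1), m.choose k • (Δ_[1])^[k] f 0 := by
    simpa using shift_eq_sum_fwdDiff_iter 1 f m 0
  rw [eval_finsetSum, hnewton, Finset.mul_sum]
  symm
  apply Finset.sum_subset_zero_on_sdiff (Finset.range_subset_range.2 (by omega))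
  · intro k hk
    simp only [Finset.mem_sdiff, Finset.mem_range] at hk
    rw [hterm k (by omega), Nat.choose_eq_zero_of_lt (by omega), zero_smul, mul_zero]
  · intro k hk
    rw [hterm k (by rw [Finset.mem_range] at hk; omega)]

theorem degree_map_sum_descPochhammer_lt {R S : Type*} [CommRing R] [NoZeroDivisors R]
    [Nontrivial R] [CommRing S] {φ : R →+* S} {c : ℕ → R} {d K : ℕ}
    (hc : ∀ k < K, d ≤ k → φ (c k) = 0) :
    ((∑ k ∈ Finset.range K, C (c k) * descPochhammer R k).map φ).degree < d := by
  rw [← mem_degreeLT, Polynomial.map_sum]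
  refine Submodule.sum_mem _ fun k hk ↦ ?_
  rw [Polynomial.map_mul, map_C]
  obtain hlt | hge := lt_or_ge k d
  · rw [mem_degreeLT, ← smul_eq_C_mul]
    refine (degree_smul_le _ _).trans_lt (degree_map_le.trans_lt ?_)
    exact natDegree_lt_iff_degree_lt (monic_descPochhammer R k).ne_zero |>.1 <| by
      rwa [descPochhammer_natDegree]
  · rw [hc k (Finset.mem_range.1 hk) hge, C_0, zero_mul]
    exact zero_mem _

theorem pow_dvd_apply_of_card_zeros {R : Type*} [CommRing R] [IsDomain R] [CharZero R] {p : ℕ}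
    (hp : p.Prime) (hp2 : p ≠ 2) {f : ℕ → R} (hf : ∀ k, (p : R) ^ k ∣ (Δ_[1])^[k] f 0) {w : ℕ}
    {T : Finset ℕ} (hT : ∀ m ∈ T, f m = 0) (hcard : 2 * w ≤ T.card) (n : ℕ) :
    (p : R) ^ w ∣ f n := by
  let K := max n (T.sup id)
  obtain ⟨u, hup, hu⟩ := exists_coprime_mul_pow_eq_factorial_mul hp hp2 K
  choose! e he hpe using hu
  choose c hc using hf
  let P : R[X] := ∑ k ∈ Finset.range (K + 1), C (e k * c k) * descPochhammer R k
  have hP {m : ℕ} (hm : m ≤ K) : P.eval (m : R) = u * f m := by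
    refine eval_sum_descPochhammer_eq_mul (fun k hk ↦ ?_) hm
    rw [hc, ← mul_assoc, ← mul_assoc]
    exact congrArg (· * c k) (by exact_mod_cast he k hk)
  let φ := Ideal.Quotient.mk (Ideal.span {(p : R) ^ w})
  have hφ (x : R) : φ x = 0 ↔ (p : R) ^ w ∣ x := by
    rw [Ideal.Quotient.eq_zero_iff_mem, Ideal.mem_span_singleton]
  have hroots : ∀ x ∈ T.map Nat.castEmbedding, P.IsRoot x := by
    simp only [Finset.mem_map, Nat.castEmbedding_apply, forall_exists_index, and_imp]
    rintro _ m hm rfl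
    have hmK : m ≤ K := (Finset.le_sup (f := id) hm).trans (le_max_right _ _)
    rw [IsRoot, hP hmK, hT m hm, mul_zero]
  have hcoeff (k : ℕ) (hk : k < K + 1) (hwk : 2 * w ≤ k) : φ (e k * c k) = 0 := by
    have hdvd : p ^ w ∣ e k := (pow_dvd_pow p (by omega)).trans (hpe k (by omega))
    have hdvdR : (p : R) ^ w ∣ e k := by simpa using map_dvd (Nat.castRingHom R) hdvd
    exact (hφ _).2 (hdvdR.mul_right _)
  have hdeg : (P.map φ).degree < (T.map (Nat.castEmbedding (R := R))).card := by
    rw [Finset.card_map]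
    exact (degree_map_sum_descPochhammer_lt hcoeff).trans_le (by exact_mod_cast hcard)
  have hdvd : (p : R) ^ w ∣ u * f n := by
    rw [← hP (le_max_left _ _), ← hφ, ← eval_map_apply,
      map_eq_zero_of_degree_map_lt_card_roots hroots hdeg, eval_zero]
  have hcop : IsCoprime (p : R) u := by
    simpa using (Nat.isCoprime_iff_coprime.2 hup).symm.map (Int.castRingHom R)
  exact hcop.pow_left.dvd_of_dvd_mul_left hdvd

theorem eq_zero_of_infinite_zeros_of_pow_dvd_fwdDiff {R : Type*} [CommRing R] [IsDomain R]
    [CharZero R] [WfDvdMonoid R] {p : ℕ} (hp : p.Prime) (hp2 : p ≠ 2) (hpR : ¬IsUnit (p : R))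
    {f : ℕ → R} (hf : ∀ k, (p : R) ^ k ∣ (Δ_[1])^[k] f 0) (hinf : {n | f n = 0}.Infinite) :
    f = 0 := by
  funext n
  by_contra hn
  refine FiniteMultiplicity.not_iff_forall.2 (fun w ↦ ?_)
    (FiniteMultiplicity.of_not_isUnit hpR hn)
  obtain ⟨T, hT, hcard⟩ := hinf.exists_subset_card_eq (2 * w)
  exact pow_dvd_apply_of_card_zeros hp hp2 hf hT hcard.ge n

theorem fwdDiff_iter_map_pow {A G : Type*} [Ring A] [AddCommGroup G] (φ : A →+ G) (t : A) (k : ℕ) :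
    (Δ_[1])^[k] (fun n : ℕ ↦ φ (t ^ n)) = fun n ↦ φ (t ^ n * (t - 1) ^ k) := by
  induction k with
  | zero => simp
  | succ k ih =>
    ext n
    rw [Function.iterate_succ_apply', ih, fwdDiff, ← map_sub, pow_succ t, mul_assoc, ← mul_sub,
      pow_succ' (t - 1), sub_one_mul]

theorem exists_dvd_pow_sub_one_of_isCoprime {A : Type*} [CommRing A] [Module.Finite ℤ A] {n : ℕ}
    (hn : n ≠ 0) {t : A} (ht : IsCoprime t (n : A)) : ∃ N > 0, (n : A) ∣ t ^ N - 1 := by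
  let I : Ideal A := Ideal.span {(n : A)}
  have hnI : (n : A ⧸ I) = 0 := by
    rw [← map_natCast (Ideal.Quotient.mk I)]
    exact Ideal.Quotient.eq_zero_iff_mem.2 (Ideal.mem_span_singleton_self _)
  have : Finite (A ⧸ I) := Module.finite_of_fg_torsion _ fun {y} ↦
    ⟨⟨n, mem_nonZeroDivisors_of_ne_zero (by exact_mod_cast hn)⟩, by
      simp [Submonoid.smul_def, hnI]⟩
  have hunit : IsUnit (Ideal.Quotient.mk I t) := by
    simpa [hnI, isCoprime_zero_right] using ht.map (Ideal.Quotient.mk I)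
  obtain ⟨N, hN, hpow⟩ := isOfFinOrder_iff_pow_eq_one.1 hunit.isOfFinOrder
  refine ⟨N, hN, Ideal.mem_span_singleton.1 <| Ideal.Quotient.eq_zero_iff_mem.1 ?_⟩
  rw [map_sub, map_pow, hpow, map_one, sub_self]

theorem exists_dvd_X_pow_sub_one_sub {g : ℤ[X]} (hg : g.Monic) {n : ℕ} (hn : n ≠ 0)
    (hcop : IsCoprime (g.coeff 0) n) : ∃ N > 0, ∃ B : ℤ[X], g ∣ X ^ N - 1 - (n : ℤ[X]) * B := by
  have := hg.finite_adjoinRoot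
  have hroot : AdjoinRoot.root g * -AdjoinRoot.mk g g.divX = AdjoinRoot.of g (g.coeff 0) := by
    have := congrArg (AdjoinRoot.mk g) g.X_mul_divX_add
    rw [map_add, map_mul, AdjoinRoot.mk_X, AdjoinRoot.mk_C, AdjoinRoot.mk_self] at this
    linear_combination -this
  have hunit : IsCoprime (AdjoinRoot.root g) n := by
    have := hcop.map (AdjoinRoot.of g)
    rw [← hroot, map_natCast] at this
    exact this.of_mul_left_left
  obtain ⟨N, hN, b, hb⟩ := exists_dvd_pow_sub_one_of_isCoprime hn hunit
  obtain ⟨B, rfl⟩ := AdjoinRoot.mk_surjective b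
  refine ⟨N, hN, B, AdjoinRoot.mk_eq_zero.1 ?_⟩
  simp [hb]

theorem exists_pow_mul_pow_sub_one_pow_eq_smul {A : Type*} [Ring A] {t : A} (ht : IsIntegral ℤ t) :
    ∃ p : ℕ, p.Prime ∧ p ≠ 2 ∧ ∃ N > 0, ∃ r, ∀ k, ∃ b : A,
      t ^ r * (t ^ N - 1) ^ k = p ^ k • b := by
  obtain ⟨P, hP, hPt⟩ := ht
  obtain ⟨g, hPg, hXg⟩ := exists_eq_pow_rootMultiplicity_mul_and_not_dvd P hP.ne_zero 0
  set r := P.rootMultiplicity 0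
  rw [C_0, sub_zero] at hPg hXg
  have hg : g.Monic := (monic_X_pow r).of_mul_monic_left (hPg ▸ hP)
  have hg0 : g.coeff 0 ≠ 0 := mt X_dvd_iff.2 hXg
  obtain ⟨p, hplarge, hp⟩ := Nat.exists_infinite_primes ((g.coeff 0).natAbs + 3)
  have hcop : IsCoprime (g.coeff 0) p := by
    rw [Int.isCoprime_iff_gcd_eq_one]
    exact (Nat.coprime_of_lt_prime (Int.natAbs_ne_zero.2 hg0) (by omega) hp).symm
  obtain ⟨N, hN, B, hB⟩ := exists_dvd_X_pow_sub_one_sub hg hp.ne_zero hcop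
  refine ⟨p, hp, by omega, N, hN, r, fun k ↦ ⟨t ^ r * aeval t (B ^ k), ?_⟩⟩
  have hdvd : P ∣ X ^ r * ((X ^ N - 1) ^ k - ((p : ℤ[X]) * B) ^ k) :=
    hPg ▸ mul_dvd_mul_left _ (hB.trans (sub_dvd_pow_sub_pow _ _ k))
  have hzero : aeval t (X ^ r * ((X ^ N - 1) ^ k - (p ^ k : ℕ) • B ^ k) : ℤ[X]) = 0 := by
    obtain ⟨Q, hQ⟩ := hdvd
    rw [nsmul_eq_mul, Nat.cast_pow, ← mul_pow, hQ, map_mul, aeval_def, hPt, zero_mul]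
  rw [map_mul, map_sub, mul_sub, sub_eq_zero, map_nsmul, mul_smul_comm] at hzero
  simpa using hzero

end Polynomial

theorem map_pow_add_mul_eq_zero_of_infinite {A : Type*} [Ring A] (φ : A →+ ℤ) {t : A} {p N a : ℕ}
    (hp : p.Prime) (hp2 : p ≠ 2) (h : ∀ k, ∃ b : A, t ^ a * (t ^ N - 1) ^ k = p ^ k • b)
    (hinf : {m | φ (t ^ (a + N * m)) = 0}.Infinite) (m : ℕ) : φ (t ^ (a + N * m)) = 0 := by
  let f (m : ℕ) : ℤ := φ (t ^ (a + N * m))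
  have hf : f = fun m ↦ φ.comp (AddMonoidHom.mulLeft (t ^ a)) ((t ^ N) ^ m) := by
    ext m
    simp [f, pow_add, pow_mul]
  have hdiff (k : ℕ) : (p : ℤ) ^ k ∣ (Δ_[1])^[k] f 0 := by
    obtain ⟨b, hb⟩ := h k
    rw [hf, fwdDiff_iter_map_pow]
    exact ⟨φ b, by simp [hb, -nsmul_eq_mul, map_nsmul]⟩
  exact congrFun (eq_zero_of_infinite_zeros_of_pow_dvd_fwdDiff hp hp2
    (Nat.prime_iff_prime_int.1 hp).not_isUnit hdiff hinf) m

theorem isEventuallyPeriodic_setOf_map_pow_eq_zero_of_free {A G : Type*} [Ring A] [AddCommGroup G]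
    [Module.Free ℤ G] (Λ : A →+ G) {t : A} (ht : IsIntegral ℤ t) :
    IsEventuallyPeriodic {n | Λ (t ^ n) = 0} := by
  obtain ⟨p, hp, hp2, N, hN, r, hr⟩ := exists_pow_mul_pow_sub_one_pow_eq_smul ht
  refine .of_progressions hN (eventually_atTop.2 ⟨r, fun a ha ↦ ?_⟩)
  refine or_iff_not_imp_left.2 fun hinf ↦ Set.eq_univ_of_forall fun m ↦ ?_
  let b := Module.Free.chooseBasis ℤ G
  refine b.ext_elem fun i ↦ ?_
  let φ : A →+ ℤ := (b.coord i).toAddMonoidHom.comp Λ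
  have hinfφ : {m | φ (t ^ (a + N * m)) = 0}.Infinite :=
    Set.Infinite.mono (fun m hm ↦ by simp_all [φ]) hinf
  have ha (k : ℕ) : ∃ b : A, t ^ a * (t ^ N - 1) ^ k = p ^ k • b := by
    obtain ⟨b, hb⟩ := hr k
    exact ⟨t ^ (a - r) * b, by
      rw [← Nat.sub_add_cancel ha, pow_add, mul_assoc, hb, mul_smul_comm, Nat.sub_add_cancel ha]⟩
  simpa [φ] using map_pow_add_mul_eq_zero_of_infinite φ hp hp2 ha hinfφ m

theorem isEventuallyPeriodic_setOf_map_pow_eq_zero {A W : Type*} [Ring A] [AddCommGroup W]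
    [IsAddTorsionFree W] (Λ : A →+ W) {t : A} (ht : IsAlgebraic ℤ t) :
    IsEventuallyPeriodic {n | Λ (t ^ n) = 0} := by
  obtain ⟨D, hD, hint⟩ := ht.exists_integral_multiple
  let B := Algebra.adjoin ℤ {D • t}
  have : Module.Finite ℤ B := Module.Finite.iff_fg.2 hint.fg_adjoin_singleton
  let s : B := ⟨D • t, Algebra.self_mem_adjoin_singleton ℤ _⟩
  let ΛB : B →ₗ[ℤ] LinearMap.range (Λ.toIntLinearMap ∘ₗ B.val.toLinearMap) :=
    (Λ.toIntLinearMap ∘ₗ B.val.toLinearMap).rangeRestrict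
  have hzero (n : ℕ) : ΛB (s ^ n) = 0 ↔ Λ (t ^ n) = 0 := by
    rw [← Subtype.coe_inj]
    simp [ΛB, s, smul_pow, hD, -zsmul_eq_mul]
  simpa only [← hzero] using! isEventuallyPeriodic_setOf_map_pow_eq_zero_of_free
    ΛB.toAddMonoidHom (IsIntegral.of_finite ℤ s)

section Orbit

open MvPolynomial Matrix

theorem totalDegree_bind₁_le {σ τ R : Type*} [CommSemiring R] {g : σ → MvPolynomial τ R} {n : ℕ}
    (hg : ∀ i, (g i).totalDegree ≤ n) (q : MvPolynomial σ R) :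
    (bind₁ g q).totalDegree ≤ n * q.totalDegree := by
  rw [bind₁, MvPolynomial.aeval_def, eval₂_eq]
  refine totalDegree_finsetSum_le fun d hd ↦ ?_
  refine (totalDegree_mul _ _).trans ?_
  rw [algebraMap_eq, totalDegree_C, zero_add]
  calc (∏ i ∈ d.support, g i ^ d i).totalDegree
      ≤ ∑ i ∈ d.support, (g i ^ d i).totalDegree := totalDegree_finsetProd _ _
    _ ≤ ∑ i ∈ d.support, n * d i := Finset.sum_le_sum fun i _ ↦
        (totalDegree_pow _ _).trans (by rw [mul_comm]; exact Nat.mul_le_mul_right _ (hg i))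
    _ = n * d.sum fun _ e ↦ e := (Finset.mul_sum ..).symm
    _ ≤ n * q.totalDegree := Nat.mul_le_mul_left n (le_totalDegree hd)

variable {ι K : Type*} [Fintype ι] [CommRing K]

theorem eval_bind₁_toMvPolynomial (M : Matrix ι ι K) (x : ι → K) (q : MvPolynomial ι K) :
    eval x (bind₁ M.toMvPolynomial q) = eval (M *ᵥ x) q := by
  have := aeval_bind₁ x M.toMvPolynomial q
  simpa only [aeval_eq_eval, coe_eval₂Hom, toMvPolynomial_eval_eq_apply] using this

/-- The substitution `q ↦ q ∘ M` as an endomorphism of the polynomials of total degree at most `D`;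
it presents `n ↦ q(Mⁿx)` as a linear functional of the powers of one endomorphism. -/
noncomputable def linearSubstitution (M : Matrix ι ι K) (D : ℕ) :
    Module.End K (restrictTotalDegree ι K D) :=
  (bind₁ M.toMvPolynomial).toLinearMap.restrict fun q hq ↦ by
    rw [mem_restrictTotalDegree] at hq ⊢
    have := totalDegree_bind₁_le M.toMvPolynomial_totalDegree_le q
    exact this.trans (by rwa [one_mul])

theorem eval_linearSubstitution_pow [DecidableEq ι] (M : Matrix ι ι K) (x : ι → K) {D : ℕ}
    (q : restrictTotalDegree ι K D) (n : ℕ) :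
    eval x ((linearSubstitution M D ^ n) q).1 = eval ((M ^ n) *ᵥ x) q.1 := by
  induction n generalizing x with
  | zero => simp
  | succ n ih =>
    rw [pow_succ', Module.End.mul_apply, pow_succ, ← mulVec_mulVec, ← ih,
      ← eval_bind₁_toMvPolynomial]
    rfl

theorem isEventuallyPeriodic_setOf_eval_pow_mulVec_eq_zero [DecidableEq ι] [Algebra ℚ K]
    [Algebra.IsIntegral ℚ K] (M : Matrix ι ι K) (x : ι → K) (q : MvPolynomial ι K) :
    IsEventuallyPeriodic {n | eval ((M ^ n) *ᵥ x) q = 0} := by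
  have := IsAddTorsionFree.of_module_rat K
  let V := restrictTotalDegree ι K q.totalDegree
  let q' : V := ⟨q, (mem_restrictTotalDegree _ _ _).2 le_rfl⟩
  let Λ : Module.End K V →+ K :=
    ((MvPolynomial.aeval x).toLinearMap ∘ₗ V.subtype ∘ₗ LinearMap.applyₗ q').toAddMonoidHom
  let T : Module.End K V := linearSubstitution M q.totalDegree
  have hT : IsAlgebraic ℤ T := by
    have : Algebra.IsAlgebraic ℤ ℚ := IsLocalization.isAlgebraic ℚ (nonZeroDivisors ℤ)
    have hint : IsIntegral K T := Algebra.IsIntegral.isIntegral T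
    exact (isIntegral_trans T hint : IsIntegral ℚ T).isAlgebraic.restrictScalars ℤ
  have hΛ (n : ℕ) : Λ (T ^ n) = eval ((M ^ n) *ᵥ x) q := eval_linearSubstitution_pow M x q' n
  simpa only [hΛ] using isEventuallyPeriodic_setOf_map_pow_eq_zero Λ hT

end Orbit

theorem zero_set_of_poly_orbit_semilinear_general {ι K : Type*} [Fintype ι] [DecidableEq ι]
    [CommRing K] [Algebra ℚ K] [Algebra.IsIntegral ℚ K] (M : Matrix ι ι K) (x : ι → K)
    (q : MvPolynomial ι K) :
    ∃ (F : Finset ℕ) (k : ℕ) (a b : Fin k → ℕ),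
      (∀ i, 1 ≤ b i) ∧
      {n : ℕ | MvPolynomial.eval ((M ^ n).mulVec x) q = 0} =
        ↑F ∪ ⋃ i : Fin k, {n : ℕ | ∃ m : ℕ, n = a i + b i * m} :=
  (isEventuallyPeriodic_setOf_eval_pow_mulVec_eq_zero M x q).exists_eq_finset_union_progressions

/-- For a rational matrix `M`, starting point `x ∈ ℚ^d` and a polynomial
`q ∈ ℚ[X₁,…,X_d]`, the set `{n ∈ ℕ : q(Mⁿx) = 0}` is semilinear: a union of a
finite set and finitely many full arithmetic progressions `{a + b·m : m ∈ ℕ}`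
with `b ≥ 1`. -/
theorem zero_set_of_poly_orbit_semilinear (d : ℕ) (hd : 1 ≤ d)
    (M : Matrix (Fin d) (Fin d) ℚ) (x : Fin d → ℚ)
    (q : MvPolynomial (Fin d) ℚ) :
    ∃ (F : Finset ℕ) (k : ℕ) (a b : Fin k → ℕ),
      (∀ i, 1 ≤ b i) ∧
      {n : ℕ | MvPolynomial.eval ((M ^ n).mulVec x) q = 0} =
        ↑F ∪ ⋃ i : Fin k, {n : ℕ | ∃ m : ℕ, n = a i + b i * m} :=
  zero_set_of_poly_orbit_semilinear_general M x q
end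

section
/- The Kannan–Lipton Orbit Problem (point-to-point reachability) is decidable: for every d ≥ 1, the predicate on triples (M, x, y), where M is a d × d matrix with rational entries and x, y ∈ ℚ^d, asking whether there exists n ∈ ℕ with Mⁿx = y, is a computable (decidable) predicate; that is, there exists a computable function f mapping each triple (M, x, y) to a Boolean such that f(M, x, y) = true if and only if ∃ n ∈ ℕ, Mⁿx = y. -/
/-!
Solving least squares on the Krylov matrix of `(M, x)` yields, whenever `y` lies on the orbit, a
polynomial `r` of degree `< d` with `y = r(M) x`. If `M ^ n x = y`, then the minimal annihilator
`f` of `x` divides `X ^ n - r`. A root `z` of `f`, in `ℂ` or in the algebraic closure of some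
`ℚ_ℓ`, with `‖z‖ ≥ c > 1` satisfies `z ^ n = r(z)`, and a multiple root on the unit circle
satisfies `n z ^ (n - 1) = r′(z)`; either bounds `n` linearly in the heights of the coefficients
of `r`. Otherwise, for `c` close enough to `1` in terms of `d` alone, `f` is integral with Mahler
measure below `2`, so by Northcott and Kronecker its nonzero roots are simple roots of unity of
bounded order and the orbit is eventually periodic with period and preperiod bounded in terms of
`d`. In all cases it suffices to search up to a computable bound.
-/

open Polynomial Filter Topology

namespace OrbitProblem

/-! ### Bounding the exponent by a large or multiple root -/

/-- The naive height of a rational number written in lowest terms; it bounds the norm of the number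
at every place. -/
def ratHeight (q : ℚ) : ℕ := max q.num.natAbs q.den

theorem one_le_ratHeight (q : ℚ) : 1 ≤ ratHeight q := q.den_pos.trans_le (le_max_right _ _)

theorem norm_algebraMap_complex_le_ratHeight (q : ℚ) : ‖algebraMap ℚ ℂ q‖ ≤ ratHeight q := by
  have hnum : |(q : ℝ)| ≤ q.num.natAbs := by
    rw [Rat.cast_def, abs_div, Nat.abs_cast, Nat.cast_natAbs, Int.cast_abs]
    exact div_le_self (abs_nonneg _) (mod_cast q.den_pos)
  rw [eq_ratCast, Complex.norm_ratCast]
  exact hnum.trans (mod_cast le_max_left _ _)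

section PowerGrowth

variable {K : Type*} [NormedField K] {r : K[X]} {d n : ℕ} {W c : ℝ} {z : K}

theorem norm_eval_le (hr : r.natDegree ≤ d) (hW : ∀ i, ‖r.coeff i‖ ≤ W) (hz : 1 ≤ ‖z‖) :
    ‖r.eval z‖ ≤ (d + 1) * W * ‖z‖ ^ d := by
  have hW0 : 0 ≤ W := (norm_nonneg _).trans (hW 0)
  have hterm : ∀ i ∈ Finset.range (d + 1), ‖r.coeff i * z ^ i‖ ≤ W * ‖z‖ ^ d := fun i hi ↦ by
    have hi : i ≤ d := Nat.lt_succ_iff.1 (Finset.mem_range.1 hi)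
    rw [norm_mul, norm_pow]
    exact mul_le_mul (hW i) (pow_le_pow_right₀ hz hi) (by positivity) hW0
  rw [eval_eq_sum_range' (Nat.lt_succ_of_le hr)]
  exact (norm_sum_le_of_le _ hterm).trans_eq (by simp [mul_assoc])

theorem exponent_le_of_pow_eq_eval (hr : r.natDegree ≤ d) (hW : ∀ i, ‖r.coeff i‖ ≤ W)
    (hc : 1 < c) (hz : c ≤ ‖z‖) (h : z ^ n = r.eval z) : n ≤ d + (d + 1) * W / (c - 1) := by
  have hc0 : 0 < c - 1 := sub_pos.2 hc
  rcases le_total n d with hnd | hnd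
  · have hW0 : 0 ≤ W := (norm_nonneg _).trans (hW 0)
    have hnd : (n : ℝ) ≤ d := mod_cast hnd
    exact hnd.trans (le_add_of_nonneg_right (by positivity))
  obtain ⟨k, rfl⟩ := Nat.exists_eq_add_of_le hnd
  have hz1 : 1 ≤ ‖z‖ := hc.le.trans hz
  have hpow : ‖z‖ ^ k ≤ (d + 1) * W := by
    refine le_of_mul_le_mul_right ?_ (pow_pos (zero_lt_one.trans_le hz1) d)
    calc ‖z‖ ^ k * ‖z‖ ^ d = ‖r.eval z‖ := by rw [← h, norm_pow, pow_add, mul_comm]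
      _ ≤ (d + 1) * W * ‖z‖ ^ d := norm_eval_le hr hW hz1
  have hbernoulli : 1 + k * (c - 1) ≤ (d + 1) * W :=
    calc 1 + k * (c - 1) ≤ c ^ k := one_add_mul_sub_le_pow (by linarith) k
      _ ≤ ‖z‖ ^ k := by gcongr
      _ ≤ (d + 1) * W := hpow
  have hk : (k : ℝ) ≤ (d + 1) * W / (c - 1) := by
    rw [le_div_iff₀ hc0]
    linarith
  push_cast
  linarith

end PowerGrowth

/-- A multiple root survives in the derivative `n z ^ (n - 1) = r′(z)`, whose left side has
norm `n`. -/
theorem exponent_le_of_multiple_root {r : ℂ[X]} {d n : ℕ} {W : ℝ} {z : ℂ} (hr : r.natDegree ≤ d)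
    (hW : ∀ i, ‖r.coeff i‖ ≤ W) (hz : ‖z‖ = 1)
    (h : (X - C z) ^ 2 ∣ X ^ n - r) : n ≤ (d + 1) * (d * W) := by
  have hcoeff (i : ℕ) : ‖(derivative r).coeff i‖ ≤ d * W := by
    rw [coeff_derivative, norm_mul, mul_comm]
    rcases lt_or_ge i d with hi | hi
    · have hi' : ‖(i : ℂ) + 1‖ ≤ d := by
        rw [← Nat.cast_succ, Complex.norm_natCast]
        exact mod_cast hi
      exact mul_le_mul hi' (hW _) (norm_nonneg _) d.cast_nonneg
    · rw [coeff_eq_zero_of_natDegree_lt (by omega), norm_zero, mul_zero]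
      exact mul_nonneg d.cast_nonneg ((norm_nonneg _).trans (hW 0))
  have hder : n * z ^ (n - 1) = (derivative r).eval z := by
    have hroot : (derivative (X ^ n - r)).IsRoot z :=
      dvd_iff_isRoot.1 (by simpa using pow_sub_one_dvd_derivative_of_pow_dvd h)
    simpa [derivative_X_pow, sub_eq_zero] using hroot
  calc (n : ℝ) = ‖n * z ^ (n - 1)‖ := by simp [hz]
    _ ≤ (d + 1) * (d * W) * ‖z‖ ^ d := by
      rw [hder]
      exact norm_eval_le ((natDegree_derivative_le r).trans (by omega)) hcoeff hz.ge
    _ = (d + 1) * (d * W) := by rw [hz, one_pow, mul_one]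

/-! ### Roots at the `ℓ`-adic places -/

section Padic

theorem norm_coeff_prod_X_sub_C_le_pow {K : Type*} [NormedField K] [IsUltrametricDist K] {B : ℝ}
    (hB : 1 ≤ B) {s : Multiset K} (hs : ∀ z ∈ s, ‖z‖ ≤ B) (i : ℕ) :
    ‖(s.map fun z ↦ X - C z).prod.coeff i‖ ≤ B ^ s.card := by
  induction s using Multiset.induction_on generalizing i with
  | empty =>
    rw [Multiset.map_zero, Multiset.prod_zero, coeff_one]
    split_ifs <;> simp
  | cons z s ih =>
    have hz := hs z (Multiset.mem_cons_self z s)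
    specialize ih fun w hw ↦ hs w (Multiset.mem_cons_of_mem hw)
    have hstep : ‖z * (s.map fun z ↦ X - C z).prod.coeff i‖ ≤ B ^ (s.card + 1) := by
      rw [norm_mul, pow_succ']
      gcongr
      exact ih i
    rw [Multiset.map_cons, Multiset.prod_cons, Multiset.card_cons, sub_mul, coeff_sub,
      coeff_C_mul, sub_eq_add_neg]
    refine (IsUltrametricDist.norm_add_le_max _ _).trans (max_le ?_ (by rwa [norm_neg]))
    cases i with
    | zero =>
      rw [coeff_X_mul_zero, norm_zero]
      positivity
    | succ i =>
      rw [coeff_X_mul]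
      exact (ih i).trans (pow_le_pow_right₀ hB s.card.le_succ)

theorem norm_coeff_le_pow_of_roots_le {K : Type*} [NormedField K] [IsUltrametricDist K] {f : K[X]}
    {B : ℝ} (hf : f.Monic) (hs : f.Splits) (hB : 1 ≤ B) (h : ∀ z ∈ f.roots, ‖z‖ ≤ B) (i : ℕ) :
    ‖f.coeff i‖ ≤ B ^ f.natDegree := by
  rw [hs.natDegree_eq_card_roots]
  conv_lhs => rw [hs.eq_prod_roots_of_monic hf]
  exact norm_coeff_prod_X_sub_C_le_pow hB h i

variable {ℓ : ℕ} [Fact ℓ.Prime]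

theorem inv_le_norm_natCast_padic {m : ℕ} (hm : m ≠ 0) : (m : ℝ)⁻¹ ≤ ‖(m : ℚ_[ℓ])‖ := by
  rw [Padic.norm_eq_zpow_neg_valuation (by simpa), Padic.valuation_natCast, zpow_neg, zpow_natCast]
  have hℓ : 0 < ℓ := (Fact.out : ℓ.Prime).pos
  gcongr
  exact_mod_cast Nat.le_of_dvd hm.bot_lt pow_padicValNat_dvd

theorem norm_ratCast_mul_den_padic (q : ℚ) :
    ‖(q : ℚ_[ℓ])‖ * ‖(q.den : ℚ_[ℓ])‖ = ‖(q.num : ℚ_[ℓ])‖ := by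
  rw [← norm_mul]
  exact_mod_cast congrArg (fun t : ℚ ↦ ‖(t : ℚ_[ℓ])‖) q.mul_den_eq_num

theorem norm_ratCast_padic_le_den (q : ℚ) : ‖(q : ℚ_[ℓ])‖ ≤ q.den := by
  have hden : (0 : ℝ) < q.den := mod_cast q.den_pos
  calc ‖(q : ℚ_[ℓ])‖ = ‖(q : ℚ_[ℓ])‖ * (q.den : ℝ)⁻¹ * q.den :=
      (inv_mul_cancel_right₀ hden.ne' _).symm
    _ ≤ ‖(q : ℚ_[ℓ])‖ * ‖(q.den : ℚ_[ℓ])‖ * q.den := by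
      gcongr
      exact inv_le_norm_natCast_padic q.den_ne_zero
    _ ≤ 1 * q.den := by
      rw [norm_ratCast_mul_den_padic]
      gcongr
      exact Padic.norm_int_le_one q.num
    _ = q.den := one_mul _

theorem prime_le_norm_ratCast_padic {q : ℚ} (h : ℓ ∣ q.den) : ℓ ≤ ‖(q : ℚ_[ℓ])‖ := by
  have hℓ : ℓ.Prime := Fact.out
  have hnum : ‖(q.num : ℚ_[ℓ])‖ = 1 := by
    rw [Padic.norm_intCast_eq_one_iff, Int.isCoprime_iff_gcd_eq_one]
    exact q.reduced.coprime_dvd_right h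
  have hden : ‖(q.den : ℚ_[ℓ])‖ ≤ (ℓ : ℝ)⁻¹ := by
    simpa using (Padic.norm_int_le_pow_iff_dvd (p := ℓ) q.den 1).2 (mod_cast by simpa using h)
  have hone : 1 ≤ ‖(q : ℚ_[ℓ])‖ * (ℓ : ℝ)⁻¹ := by
    rw [← hnum, ← norm_ratCast_mul_den_padic]
    gcongr
  rwa [← div_eq_mul_inv, one_le_div (mod_cast hℓ.pos)] at hone

theorem norm_algebraMap_padicAlgCl (q : ℚ) : ‖algebraMap ℚ (PadicAlgCl ℓ) q‖ = ‖(q : ℚ_[ℓ])‖ := by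
  rw [IsScalarTower.algebraMap_apply ℚ ℚ_[ℓ], PadicAlgCl.norm_extends, eq_ratCast]

theorem norm_algebraMap_padicAlgCl_le_ratHeight (q : ℚ) :
    ‖algebraMap ℚ (PadicAlgCl ℓ) q‖ ≤ ratHeight q := by
  rw [norm_algebraMap_padicAlgCl]
  exact (norm_ratCast_padic_le_den q).trans (mod_cast le_max_right _ _)

end Padic

theorem mem_lifts_int_of_padic_roots_le {f : ℚ[X]} (hf : f.Monic) {c : ℝ} (hc : 1 ≤ c)
    (hcf : c ^ f.natDegree < 2)
    (h : ∀ (ℓ : ℕ) [Fact ℓ.Prime], ∀ z ∈ f.aroots (PadicAlgCl ℓ), ‖z‖ ≤ c) :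
    f ∈ lifts (Int.castRingHom ℚ) := by
  rw [lifts_iff_coeff_lifts]
  intro i
  suffices hden : (f.coeff i).den = 1 from
    ⟨(f.coeff i).num, (Rat.den_eq_one_iff _).1 hden⟩
  by_contra hden
  obtain ⟨ℓ, hℓ, hdvd⟩ := Nat.exists_prime_and_dvd hden
  have : Fact ℓ.Prime := ⟨hℓ⟩
  have hcoeff := norm_coeff_le_pow_of_roots_le (hf.map (algebraMap ℚ (PadicAlgCl ℓ)))
    (IsAlgClosed.splits _) hc (h ℓ) i
  rw [coeff_map, norm_algebraMap_padicAlgCl, natDegree_map] at hcoeff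
  have hℓ2 : (2 : ℝ) ≤ ℓ := mod_cast hℓ.two_le
  exact (hℓ2.trans (prime_le_norm_ratCast_padic hdvd)).not_gt (hcoeff.trans_lt hcf)

/-! ### A uniform version of Kronecker's theorem -/

theorem mahlerMeasure_le_pow_of_roots_le {f : ℂ[X]} (hf : f.Monic) {c : ℝ} (hc : 1 ≤ c)
    (h : ∀ z ∈ f.roots, ‖z‖ ≤ c) : f.mahlerMeasure ≤ c ^ f.natDegree := by
  rw [mahlerMeasure_eq_leadingCoeff_mul_prod_roots, hf.leadingCoeff, norm_one, one_mul,
    (IsAlgClosed.splits f).natDegree_eq_card_roots]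
  refine (Multiset.prod_map_le_prod_map₀ _ (fun _ ↦ c) (fun z _ ↦ by positivity)
    fun z hz ↦ max_le hc (h z hz)).trans_eq ?_
  rw [Multiset.map_const', Multiset.prod_replicate]

theorem eq_zero_or_isOfFinOrder_of_norm_roots_le_one {f : ℤ[X]} (hf : f.Monic)
    (h : ∀ z ∈ f.aroots ℂ, ‖z‖ ≤ 1) {z : ℂ} (hz : z ∈ f.aroots ℂ) : z = 0 ∨ IsOfFinOrder z := by
  have hle := mahlerMeasure_le_pow_of_roots_le (hf.map _) le_rfl h
  rw [one_pow] at hle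
  refine or_iff_not_imp_left.2 fun hz0 ↦ isOfFinOrder_iff_pow_eq_one.2 ?_
  exact pow_eq_one_of_mahlerMeasure_eq_one
    (hle.antisymm (one_le_mahlerMeasure_of_ne_zero hf.ne_zero)) hz0 hz

theorem exists_pow_eq_one_of_finite {G : Type*} [Monoid G] {s : Set G} (hs : s.Finite) :
    ∃ L > 0, ∀ z ∈ s, IsOfFinOrder z → z ^ L = 1 := by
  classical
  lift s to Finset G using hs
  refine ⟨∏ z ∈ s with IsOfFinOrder z, orderOf z, Finset.prod_pos fun z hz ↦
    (Finset.mem_filter.1 hz).2.orderOf_pos, fun z hz hfin ↦ orderOf_dvd_iff_pow_eq_one.1 ?_⟩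
  exact Finset.dvd_prod_of_mem orderOf (Finset.mem_filter.2 ⟨hz, hfin⟩)

theorem eventually_le_one_of_le {s : Set ℝ} (hs : s.Finite) :
    ∀ᶠ c in 𝓝[>] (1 : ℝ), ∀ t ∈ s, t ≤ c → t ≤ 1 := by
  refine (eventually_all_finite hs).2 fun t _ ↦ ?_
  rcases le_or_gt t 1 with ht | ht
  · exact .of_forall fun _ _ ↦ ht
  · filter_upwards [nhdsWithin_le_nhds (eventually_lt_nhds ht)] with c hc hle
    exact absurd hle hc.not_ge

theorem exists_uniform_kronecker (d : ℕ) :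
    ∃ c > (1 : ℝ), c ^ d < 2 ∧ ∃ L > 0, ∀ f : ℤ[X], f.Monic → f.natDegree ≤ d →
      (∀ z ∈ f.aroots ℂ, ‖z‖ ≤ c) → ∀ z ∈ f.aroots ℂ, z = 0 ∨ z ^ L = 1 := by
  let F : Set ℤ[X] := {f | f.natDegree ≤ d ∧ (f.map (Int.castRingHom ℂ)).mahlerMeasure ≤ 2}
  let S : Set ℂ := ⋃ f ∈ F, {z | z ∈ f.aroots ℂ}
  have hS : S.Finite := (finite_mahlerMeasure_le d 2).biUnion fun f _ ↦ (f.aroots ℂ).finite_toSet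
  obtain ⟨L, hL, hSL⟩ := exists_pow_eq_one_of_finite hS
  have hpow : ∀ᶠ c in 𝓝[>] (1 : ℝ), c ^ d < 2 :=
    nhdsWithin_le_nhds <| (continuous_pow d).continuousAt.eventually_lt_const (by norm_num)
  obtain ⟨c, hcS, hcd, hc⟩ :=
    ((eventually_le_one_of_le (hS.image norm)).and (hpow.and self_mem_nhdsWithin)).exists
  refine ⟨c, hc, hcd, L, hL, fun f hf hfd hroots z hz ↦ ?_⟩
  have hfF : f ∈ F := ⟨hfd, by
    have hmahler := mahlerMeasure_le_pow_of_roots_le (hf.map _) hc.le hroots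
    rw [hf.natDegree_map] at hmahler
    exact hmahler.trans ((pow_le_pow_right₀ hc.le hfd).trans hcd.le)⟩
  have hmem : ∀ w ∈ f.aroots ℂ, w ∈ S := fun w hw ↦ Set.mem_biUnion hfF hw
  have hone : ∀ w ∈ f.aroots ℂ, ‖w‖ ≤ 1 := fun w hw ↦
    hcS ‖w‖ (Set.mem_image_of_mem _ (hmem w hw)) (hroots w hw)
  exact (eq_zero_or_isOfFinOrder_of_norm_roots_le_one hf hone hz).imp_right (hSL z (hmem z hz))

theorem exists_uniform_kronecker_rat (d : ℕ) :
    ∃ c > (1 : ℝ), ∃ L > 0, ∀ f : ℚ[X], f.Monic → f.natDegree ≤ d →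
      (∀ (ℓ : ℕ) [Fact ℓ.Prime], ∀ z ∈ f.aroots (PadicAlgCl ℓ), ‖z‖ ≤ c) →
      (∀ z ∈ f.aroots ℂ, ‖z‖ ≤ c) → ∀ z ∈ f.aroots ℂ, z = 0 ∨ z ^ L = 1 := by
  obtain ⟨c, hc, hcd, L, hL, hkronecker⟩ := exists_uniform_kronecker d
  refine ⟨c, hc, L, hL, fun f hf hfd hpadic ↦ ?_⟩
  have hcf : c ^ f.natDegree < 2 := (pow_le_pow_right₀ hc.le hfd).trans_lt hcd
  obtain ⟨g, rfl, hgd, hg⟩ :=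
    lifts_and_natDegree_eq_and_monic (mem_lifts_int_of_padic_roots_le hf hc.le hcf hpadic) hf
  have haroots : (g.map (Int.castRingHom ℚ)).aroots ℂ = g.aroots ℂ := by
    rw [aroots, aroots, Polynomial.map_map,
      RingHom.ext_int ((algebraMap ℚ ℂ).comp _) (algebraMap ℤ ℂ)]
  rw [haroots]
  exact hkronecker g hg (hgd.trans_le hfd)

/-! ### The exponent dichotomy -/

theorem exponent_le_of_large_root {K : Type*} [NormedField K] [Algebra ℚ K] {f r : ℚ[X]}
    {d n W : ℕ} {c : ℝ} {z : K} (hK : ∀ q, ‖algebraMap ℚ K q‖ ≤ ratHeight q)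
    (hr : r.natDegree ≤ d) (hW : ∀ i, ratHeight (r.coeff i) ≤ W) (hdvd : f ∣ X ^ n - r)
    (hc : 1 < c) (hz : z ∈ f.aroots K) (hcz : c ≤ ‖z‖) :
    n ≤ d + (d + 1) * W / (c - 1) := by
  refine exponent_le_of_pow_eq_eval (r := r.map (algebraMap ℚ K)) (natDegree_map_le.trans hr)
    (fun i ↦ ?_) hc hcz ?_
  · rw [coeff_map]
    exact (hK _).trans (mod_cast hW i)
  · have hroot := aeval_eq_zero_of_dvd_aeval_eq_zero hdvd (mem_aroots.1 hz).2
    simpa [sub_eq_zero, eval_map_algebraMap] using hroot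

theorem exponent_le_of_one_lt_rootMultiplicity {f r : ℚ[X]} {d n W : ℕ} {z : ℂ}
    (hr : r.natDegree ≤ d) (hW : ∀ i, ratHeight (r.coeff i) ≤ W) (hdvd : f ∣ X ^ n - r)
    (hz : ‖z‖ = 1) (hmult : 1 < (f.map (algebraMap ℚ ℂ)).rootMultiplicity z) :
    n ≤ (d + 1) * (d * W) := by
  have hsq : (X - C z) ^ 2 ∣ X ^ n - r.map (algebraMap ℚ ℂ) := by
    have hmap := Polynomial.map_dvd (algebraMap ℚ ℂ) hdvd
    rw [Polynomial.map_sub, Polynomial.map_pow, map_X] at hmap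
    exact ((pow_dvd_pow _ hmult).trans (pow_rootMultiplicity_dvd _ z)).trans hmap
  have hcoeff (i : ℕ) : ‖(r.map (algebraMap ℚ ℂ)).coeff i‖ ≤ W := by
    rw [coeff_map]
    exact (norm_algebraMap_complex_le_ratHeight _).trans (mod_cast hW i)
  exact_mod_cast exponent_le_of_multiple_root (natDegree_map_le.trans hr) hcoeff hz hsq

theorem dvd_X_pow_mul_X_pow_sub_one {K : Type*} [Field K] [IsAlgClosed K] {f : K[X]} {d L : ℕ}
    (hf : f ≠ 0) (hfd : f.natDegree ≤ d) (hL : 0 < L) (hroot : ∀ z ∈ f.roots, z = 0 ∨ z ^ L = 1)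
    (hsimple : ∀ z ≠ 0, f.rootMultiplicity z ≤ 1) : f ∣ X ^ d * (X ^ L - 1) := by
  classical
  have hg : (X ^ d * (X ^ L - 1) : K[X]) ≠ 0 :=
    mul_ne_zero (pow_ne_zero d X_ne_zero) (X_pow_sub_C_ne_zero hL 1)
  rw [IsAlgClosed.dvd_iff_roots_le_roots hf hg, Multiset.le_iff_count]
  intro z
  by_cases hz : z ∈ f.roots
  · rw [count_roots, count_roots]
    rcases eq_or_ne z 0 with rfl | hz0
    · refine ((count_roots f).symm.trans_le (Multiset.count_le_card _ _)).trans ?_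
      refine ((card_roots' f).trans hfd).trans ?_
      rw [le_rootMultiplicity_iff hg]
      simp
    · refine (hsimple z hz0).trans ((rootMultiplicity_pos hg).2 ?_)
      simp [IsRoot, (hroot z hz).resolve_left hz0]
  · rw [Multiset.count_eq_zero_of_notMem hz]
    exact Nat.zero_le _

theorem exponent_le_or_dvd_of_dvd_X_pow_sub (d : ℕ) :
    ∃ B L : ℕ, 0 < L ∧ ∀ (f r : ℚ[X]) (n W : ℕ), f.Monic → f.natDegree ≤ d → r.natDegree ≤ d →
      (∀ i, ratHeight (r.coeff i) ≤ W) → f ∣ X ^ n - r →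
      n ≤ B * W ∨ f ∣ X ^ d * (X ^ L - 1) := by
  obtain ⟨c, hc, L, hL, hkronecker⟩ := exists_uniform_kronecker_rat d
  obtain ⟨b, hb⟩ := exists_nat_ge ((d + 1) / (c - 1))
  refine ⟨d + b + (d + 1) * d, L, hL, fun f r n W hf hfd hr hW hdvd ↦
    or_iff_not_imp_left.2 fun hn ↦ ?_⟩
  have hW1 : 1 ≤ W := (one_le_ratHeight _).trans (hW 0)
  have hdW : d ≤ d * W := Nat.le_mul_of_pos_right d hW1
  replace hn : d * W + b * W + (d + 1) * (d * W) < n := by linarith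
  have hlarge : d + (d + 1) * W / (c - 1) < n :=
    calc d + (d + 1) * W / (c - 1) = d + (d + 1) / (c - 1) * W := by ring
      _ ≤ d + b * W := by gcongr
      _ < n := by exact_mod_cast (by omega : d + b * W < n)
  have hroots {K : Type} [NormedField K] [Algebra ℚ K]
      (hK : ∀ q, ‖algebraMap ℚ K q‖ ≤ ratHeight q) (z : K) (hz : z ∈ f.aroots K) : ‖z‖ ≤ c :=
    le_of_not_ge fun hcz ↦ hlarge.not_ge (exponent_le_of_large_root hK hr hW hdvd hc hz hcz)
  have hunity := hkronecker f hf hfd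
    (fun _ _ ↦ hroots norm_algebraMap_padicAlgCl_le_ratHeight)
    (hroots norm_algebraMap_complex_le_ratHeight)
  have hf0 := (hf.map (algebraMap ℚ ℂ)).ne_zero
  have hsimple (z : ℂ) (hz : z ≠ 0) : (f.map (algebraMap ℚ ℂ)).rootMultiplicity z ≤ 1 := by
    by_contra! hmult
    have hroot : z ∈ f.aroots ℂ :=
      (mem_roots hf0).2 ((rootMultiplicity_pos hf0).1 (zero_lt_one.trans hmult))
    have hnorm : ‖z‖ = 1 :=
      Complex.norm_eq_one_of_pow_eq_one ((hunity z hroot).resolve_left hz) hL.ne'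
    exact (le_add_self.trans_lt hn).not_ge
      (exponent_le_of_one_lt_rootMultiplicity hr hW hdvd hnorm hmult)
  rw [← Polynomial.map_dvd_map' (algebraMap ℚ ℂ)]
  simpa using dvd_X_pow_mul_X_pow_sub_one hf0
    (natDegree_map_le.trans hfd) hL hunity hsimple

/-! ### Orbits of endomorphisms -/

theorem exists_monic_dvd_iff_aeval_apply_eq_zero {K V : Type*} [Field K] [AddCommGroup V]
    [Module K V] [FiniteDimensional K V] (T : Module.End K V) (x : V) :
    ∃ f : K[X], f.Monic ∧ f.natDegree ≤ Module.finrank K V ∧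
      ∀ q, f ∣ q ↔ aeval T q x = 0 := by
  classical
  let I := Ideal.torsionOf K[X] (Module.AEval' T) (Module.AEval'.of T x)
  let f := normalize (Submodule.IsPrincipal.generator I)
  have hf (q : K[X]) : f ∣ q ↔ aeval T q x = 0 := by
    rw [normalize_dvd_iff, ← Submodule.IsPrincipal.mem_iff_generator_dvd, Ideal.mem_torsionOf_iff,
      ← Module.AEval.of_aeval_smul, LinearEquiv.map_eq_zero_iff]
    rfl
  have hchar : f ∣ T.charpoly := (hf _).2 (by rw [LinearMap.aeval_self_charpoly]; rfl)
  have hf0 : f ≠ 0 := ne_zero_of_dvd_ne_zero T.charpoly_monic.ne_zero hchar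
  refine ⟨f, monic_normalize (normalize_eq_zero.not.1 hf0), ?_, hf⟩
  exact (natDegree_le_of_dvd hchar T.charpoly_monic.ne_zero).trans_eq T.charpoly_natDegree

theorem exists_lt_iterate_eq {α : Type*} {g : α → α} {x : α} {m L : ℕ} (hL : 0 < L)
    (h : g^[m + L] x = g^[m] x) (n : ℕ) : ∃ k < m + L, g^[k] x = g^[n] x := by
  rcases lt_or_ge n (m + L) with hn | hn
  · exact ⟨n, hn, rfl⟩
  have hperiodic : Function.IsPeriodicPt g L (g^[m] x) := by
    rw [Function.IsPeriodicPt, Function.IsFixedPt, ← Function.iterate_add_apply, add_comm, h]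
  have hmod : (n - m) % L < L := Nat.mod_lt _ hL
  refine ⟨(n - m) % L + m, by omega, ?_⟩
  rw [Function.iterate_add_apply, hperiodic.iterate_mod_apply, ← Function.iterate_add_apply,
    Nat.sub_add_cancel (by omega)]

theorem exists_orbit_time_bound (V : Type*) [AddCommGroup V] [Module ℚ V]
    [FiniteDimensional ℚ V] :
    ∃ B : ℕ, ∀ (T : Module.End ℚ V) (x : V) (r : ℚ[X]) (n W : ℕ),
      r.natDegree ≤ Module.finrank ℚ V → (∀ i, ratHeight (r.coeff i) ≤ W) →
      (T ^ n) x = aeval T r x → ∃ k ≤ B * W, (T ^ k) x = (T ^ n) x := by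
  let d := Module.finrank ℚ V
  obtain ⟨B, L, hL, hB⟩ := exponent_le_or_dvd_of_dvd_X_pow_sub d
  refine ⟨B + (d + L), fun T x r n W hr hW hn ↦ ?_⟩
  obtain ⟨f, hf, hfd, hann⟩ := exists_monic_dvd_iff_aeval_apply_eq_zero T x
  have hdvd : f ∣ X ^ n - r := (hann _).2 (by simp [hn])
  rcases hB f r n W hf hfd hr hW hdvd with hle | hperiod
  · exact ⟨n, hle.trans (Nat.mul_le_mul_right W (B.le_add_right _)), rfl⟩
  have hiter : T^[d + L] x = T^[d] x := by
    rw [← Module.End.pow_apply, ← Module.End.pow_apply, ← sub_eq_zero]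
    simpa [mul_sub, pow_add] using (hann _).1 hperiod
  obtain ⟨k, hk, hkn⟩ := exists_lt_iterate_eq hL hiter n
  have hW1 : 1 ≤ W := (one_le_ratHeight _).trans (hW 0)
  refine ⟨k, ?_, by simpa only [Module.End.pow_apply] using hkn⟩
  calc k ≤ (d + L) * W := hk.le.trans (Nat.le_mul_of_pos_right _ hW1)
    _ ≤ (B + (d + L)) * W := Nat.mul_le_mul_right W (Nat.le_add_left _ _)

/-! ### Coordinates in the Krylov matrix -/

section LeastSquares

open Matrix

variable {m n R : Type*} [Fintype m] [Fintype n] [Field R] [LinearOrder R] [IsStrictOrderedRing R]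

theorem exists_normal_equation (A : Matrix m n R) (y : m → R) :
    ∃ a, Aᵀ *ᵥ A *ᵥ a = Aᵀ *ᵥ y := by
  have hle : (Aᵀ * A).mulVecLin.range ≤ Aᵀ.mulVecLin.range := by
    rw [mulVecLin_mul]
    exact LinearMap.range_comp_le_range _ _
  have hrange : (Aᵀ * A).mulVecLin.range = Aᵀ.mulVecLin.range :=
    Submodule.eq_of_le_of_finrank_eq hle ((rank_transpose_mul_self A).trans (rank_transpose A).symm)
  obtain ⟨a, ha⟩ := hrange.ge ⟨y, rfl⟩
  exact ⟨a, (mulVec_mulVec a Aᵀ A).trans ha⟩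

theorem mulVec_eq_of_normal_equation {A : Matrix m n R} {a b : n → R}
    (h : Aᵀ *ᵥ A *ᵥ a = Aᵀ *ᵥ A *ᵥ b) : A *ᵥ a = A *ᵥ b := by
  rw [mulVec_mulVec, mulVec_mulVec, ← sub_eq_zero, ← mulVec_sub] at h
  rw [← sub_eq_zero, ← mulVec_sub]
  exact (ker_mulVecLin_transpose_mul_self A).le h

end LeastSquares

section Krylov

open Matrix

variable {R : Type*} [CommRing R] {d : ℕ}

/-- The square Krylov matrix, whose columns are `x, M x, …, M ^ (d - 1) x`. Its range contains
the whole orbit of `x`, by Cayley–Hamilton. -/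
def krylov (M : Matrix (Fin d) (Fin d) R) (x : Fin d → R) : Matrix (Fin d) (Fin d) R :=
  of fun i j ↦ (M ^ (j : ℕ) *ᵥ x) i

theorem krylov_mulVec_coeff (M : Matrix (Fin d) (Fin d) R) (x : Fin d → R) {p : R[X]}
    (hp : p.degree < d) : krylov M x *ᵥ (fun i ↦ p.coeff i) = aeval M p *ᵥ x := by
  have haeval : aeval M p = ∑ i : Fin d, p.coeff i • M ^ (i : ℕ) := by
    rw [aeval_def, eval₂_eq_sum,
      ← sum_fin (fun i c ↦ algebraMap R (Matrix (Fin d) (Fin d) R) c * M ^ i) (by simp) hp]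
    simp only [Algebra.smul_def]
  ext i
  rw [haeval, sum_mulVec, Finset.sum_apply, mulVec, dotProduct]
  simp only [smul_mulVec, Pi.smul_apply, smul_eq_mul, krylov, of_apply, mul_comm]

theorem exists_krylov_mulVec_eq_pow_mulVec (M : Matrix (Fin d) (Fin d) R) (x : Fin d → R) (n : ℕ) :
    ∃ b, krylov M x *ᵥ b = M ^ n *ᵥ x := by
  nontriviality R
  have hdeg : (X ^ n %ₘ M.charpoly).degree < d := by
    simpa [charpoly_degree_eq_dim] using degree_modByMonic_lt (X ^ n) M.charpoly_monic
  exact ⟨_, (krylov_mulVec_coeff M x hdeg).trans (by rw [← pow_eq_aeval_mod_charpoly])⟩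

end Krylov

/-! ### Computable functions -/

section Search

variable {α β : Type*} [Primcodable α] [Primcodable β]

theorem exists_computable_choice {P : α → β → Prop}
    (hP : ComputablePred fun p : α × β ↦ P p.1 p.2) (h : ∀ a, ∃ b, P a b) :
    ∃ f : α → β, Computable f ∧ ∀ a, P a (f a) := by
  classical
  let Q (a : α) (k : ℕ) : Prop := ∃ b, Encodable.decode k = some b ∧ P a b
  have hcases (a : α) (o : Option β) :
      (Option.casesOn o false fun b ↦ decide (P a b) : Bool) =
        decide (∃ b, o = some b ∧ P a b) := by
    cases o <;> simp
  have hQ : ComputablePred fun p : α × ℕ ↦ Q p.1 p.2 :=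
    Computable.computablePred ((Computable.option_casesOn
      (Computable.decode.comp Computable.snd) (Computable.const false)
      (hP.decide.comp ((Computable.fst.comp Computable.fst).pair Computable.snd)).to₂).of_eq
        fun p ↦ hcases p.1 (Encodable.decode p.2))
  have hexQ (a : α) : ∃ k, Q a k :=
    (h a).imp' Encodable.encode fun b hb ↦ ⟨b, Encodable.encodek b, hb⟩
  choose f hdecode hf using fun a ↦ Nat.find_spec (hexQ a)
  refine ⟨f, Computable.option_some_iff.1 ?_, hf⟩
  exact (Computable.decode.comp (Computable.find hQ hexQ)).of_eq hdecode

theorem computable_of_graph {f : α → β} (hf : ComputablePred fun p : α × β ↦ f p.1 = p.2) :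
    Computable f := by
  obtain ⟨g, hg, hgf⟩ := exists_computable_choice hf fun a ↦ ⟨f a, rfl⟩
  exact hg.of_eq fun a ↦ (hgf a).symm

theorem computablePred_exists_of_bound {R : α → ℕ → Prop} {B : α → ℕ}
    (hR : ComputablePred fun p : α × ℕ ↦ R p.1 p.2) (hB : Computable B)
    (h : ∀ a n, R a n → ∃ k ≤ B a, R a k) : ComputablePred fun a ↦ ∃ n, R a n := by
  classical
  have hrec (a : α) (N : ℕ) :
      decide (∃ k < N, R a k) = Nat.rec false (fun k b ↦ b || decide (R a k)) N := by
    induction N with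
    | zero => simp
    | succ N ih => simp only [Nat.exists_lt_succ_right, Bool.decide_or, ih]
  have hlt : ComputablePred fun a ↦ ∃ k < B a + 1, R a k := by
    refine Computable.computablePred ((Computable.nat_rec (Computable.succ.comp hB)
      (Computable.const false) (Primrec.or.to_comp.comp (Computable.snd.comp Computable.snd)
        (hR.decide.comp (Computable.fst.pair (Computable.fst.comp Computable.snd)))).to₂).of_eq ?_)
    exact fun a ↦ (hrec a (B a + 1)).symm
  refine hlt.of_eq fun a ↦ ⟨fun ⟨k, _, hk⟩ ↦ ⟨k, hk⟩, fun ⟨n, hn⟩ ↦ ?_⟩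
  obtain ⟨k, hkB, hk⟩ := h a n hn
  exact ⟨k, Nat.lt_succ_of_le hkB, hk⟩

end Search

section IntArithmetic

theorem encode_int_natCast (n : ℕ) : Encodable.encode (n : ℤ) = 2 * n := rfl

theorem encode_int_negSucc (n : ℕ) : Encodable.encode (Int.negSucc n) = 2 * n + 1 := rfl

theorem natAbs_eq_encode (z : ℤ) : z.natAbs = (Encodable.encode z + 1) / 2 := by
  rcases z with n | n
  · rw [Int.ofNat_eq_natCast, encode_int_natCast]
    omega
  · rw [encode_int_negSucc]
    omega

theorem primrec_int_natAbs : Primrec Int.natAbs :=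
  (Primrec.nat_div.comp (Primrec.succ.comp Primrec.encode) (Primrec.const 2)).of_eq fun z ↦
    (natAbs_eq_encode z).symm

theorem primrec_int_toNat : Primrec Int.toNat := by
  refine (Primrec.ite (Primrec.eq.comp (Primrec.nat_mod.comp Primrec.encode (Primrec.const 2))
    (Primrec.const 0)) primrec_int_natAbs (Primrec.const 0)).of_eq fun z ↦ ?_
  rcases z with n | n
  · rw [Int.ofNat_eq_natCast, encode_int_natCast, if_pos (by omega)]
    rfl
  · rw [encode_int_negSucc, if_neg (by omega), Int.toNat_negSucc]

theorem primrec_int_toNat_neg : Primrec fun z : ℤ ↦ (-z).toNat :=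
  (Primrec.nat_sub.comp primrec_int_natAbs primrec_int_toNat).of_eq fun z ↦ by omega

theorem primrec_int_natCast : Primrec fun n : ℕ ↦ (n : ℤ) :=
  Primrec.encode_iff.1 (Primrec.nat_mul.comp (Primrec.const 2) Primrec.id)

theorem primrec_int_negSucc : Primrec Int.negSucc :=
  Primrec.encode_iff.1
    (Primrec.succ.comp (Primrec.nat_mul.comp (Primrec.const 2) Primrec.id))

theorem primrec_int_subNatNat : Primrec₂ Int.subNatNat := by
  refine (Primrec.ite (Primrec.nat_le.comp Primrec.snd Primrec.fst)
    (primrec_int_natCast.comp (Primrec.nat_sub.comp Primrec.fst Primrec.snd))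
    (primrec_int_negSucc.comp (Primrec.pred.comp
      (Primrec.nat_sub.comp Primrec.snd Primrec.fst)))).of_eq fun ⟨a, b⟩ ↦ ?_
  dsimp only
  rw [Int.subNatNat_eq_coe, Nat.pred_eq_sub_one]
  split_ifs <;> omega

theorem primrec_int_add : Primrec₂ fun a b : ℤ ↦ a + b := by
  refine (primrec_int_subNatNat.comp
    (Primrec.nat_add.comp (primrec_int_toNat.comp Primrec.fst) (primrec_int_toNat.comp Primrec.snd))
    (Primrec.nat_add.comp (primrec_int_toNat_neg.comp Primrec.fst)
      (primrec_int_toNat_neg.comp Primrec.snd))).of_eq fun ⟨a, b⟩ ↦ ?_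
  dsimp only
  rw [Int.subNatNat_eq_coe]
  omega

theorem primrec_int_mul : Primrec₂ fun a b : ℤ ↦ a * b := by
  have hpos : Primrec fun p : ℤ × ℤ ↦ p.1.toNat * p.2.toNat + (-p.1).toNat * (-p.2).toNat :=
    Primrec.nat_add.comp
      (Primrec.nat_mul.comp (primrec_int_toNat.comp Primrec.fst)
        (primrec_int_toNat.comp Primrec.snd))
      (Primrec.nat_mul.comp (primrec_int_toNat_neg.comp Primrec.fst)
        (primrec_int_toNat_neg.comp Primrec.snd))
  have hneg : Primrec fun p : ℤ × ℤ ↦ p.1.toNat * (-p.2).toNat + (-p.1).toNat * p.2.toNat :=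
    Primrec.nat_add.comp
      (Primrec.nat_mul.comp (primrec_int_toNat.comp Primrec.fst)
        (primrec_int_toNat_neg.comp Primrec.snd))
      (Primrec.nat_mul.comp (primrec_int_toNat_neg.comp Primrec.fst)
        (primrec_int_toNat.comp Primrec.snd))
  refine (primrec_int_subNatNat.comp hpos hneg).of_eq fun ⟨a, b⟩ ↦ ?_
  conv_rhs => rw [← Int.toNat_sub_toNat_neg a, ← Int.toNat_sub_toNat_neg b]
  rw [Int.subNatNat_eq_coe]
  push_cast
  ring

end IntArithmetic

section Rat

/-- `Denumerable.ofEncodableOfInfinite`, which gives Mathlib's encoding of `ℚ`, codes `a` by the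
rank of its raw code among all raw codes; a search recovers the raw code from its rank. -/
theorem computable_encode_ofEncodableOfInfinite {α : Type*} [Encodable α] [Infinite α]
    (hrange : PrimrecPred (· ∈ Set.range (Encodable.encode : α → ℕ))) :
    @Computable α ℕ (@Primcodable.ofDenumerable α (.ofEncodableOfInfinite α)) _
      (‹Encodable α›.encode) := by
  let raw : α → ℕ := Encodable.encode
  let _ : DecidablePred (· ∈ Set.range raw) := Encodable.decidableRangeEncode α
  let _ := Denumerable.ofEncodableOfInfinite α
  have hencode := @Encodable.encode_injective α (Denumerable.ofEncodableOfInfinite α).toEncodable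
  let rank (k : ℕ) : ℕ := ((List.range k).filter (· ∈ Set.range raw)).length
  have hrank (a : α) : rank (raw a) = (Denumerable.ofEncodableOfInfinite α).encode a :=
    List.countP_eq_length_filter.symm
  have hrank_primrec : Primrec rank :=
    Primrec.list_length.comp ((Primrec.listFilter hrange).comp Primrec.list_range)
  refine computable_of_graph (f := raw) (PrimrecPred.computablePred ((hrange.comp Primrec.snd).and
    (Primrec.eq.comp (Primrec.encode.comp Primrec.fst) (hrank_primrec.comp Primrec.snd)))
    |>.of_eq fun ⟨a, k⟩ ↦ ⟨?_, ?_⟩)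
  · rintro ⟨⟨b, rfl⟩, hab⟩
    exact congrArg raw (hencode (hab.trans (hrank b)))
  · rintro (rfl : raw a = k)
    exact ⟨⟨a, rfl⟩, (hrank a).symm⟩

theorem coprime_iff_forall_lt_mod {a b : ℕ} (hb : 0 < b) :
    a.Coprime b ↔ ∀ e < b + 1, ¬(a % e = 0 ∧ b % e = 0 ∧ e ≠ 1) := by
  simp only [← Nat.dvd_iff_mod_eq_zero]
  refine ⟨fun h e _ he ↦ he.2.2 (Nat.eq_one_of_dvd_coprimes h he.1 he.2.1), fun h ↦ ?_⟩
  by_contra hgcd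
  exact h _ (Nat.lt_succ_of_le (Nat.gcd_le_right a hb))
    ⟨Nat.gcd_dvd_left a b, Nat.gcd_dvd_right a b, hgcd⟩

theorem primrecRel_pos_and_coprime : PrimrecRel fun a b : ℕ ↦ 0 < b ∧ a.Coprime b := by
  have hdvd {f : ℕ × ℕ → ℕ} (hf : Primrec f) : PrimrecPred fun q ↦ f q % q.1 = 0 :=
    Primrec.eq.comp (Primrec.nat_mod.comp hf Primrec.fst) (Primrec.const 0)
  have hunpair := Primrec.unpair.comp (Primrec.snd (α := ℕ) (β := ℕ))
  have hcommon : PrimrecRel fun e k : ℕ ↦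
      ¬(k.unpair.1 % e = 0 ∧ k.unpair.2 % e = 0 ∧ e ≠ 1) :=
    ((hdvd (Primrec.fst.comp hunpair)).and ((hdvd (Primrec.snd.comp hunpair)).and
      (Primrec.eq.comp Primrec.fst (Primrec.const 1)).not)).not
  refine ((Primrec.nat_lt.comp (Primrec.const 0) Primrec.snd).and
    (hcommon.forall_lt.comp (Primrec.succ.comp Primrec.snd) Primrec₂.natPair)).of_eq fun p ↦ ?_
  simp only [Nat.unpair_pair]
  exact and_congr_right fun hp ↦ (coprime_iff_forall_lt_mod hp).symm

theorem encode_rat_eq_pair (q : ℚ) :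
    Rat.instEncodable.encode q = Nat.pair (Encodable.encode q.num) q.den := rfl

theorem mem_range_encode_rat_iff (k : ℕ) :
    k ∈ Set.range Rat.instEncodable.encode ↔
      0 < k.unpair.2 ∧ ((k.unpair.1 + 1) / 2).Coprime k.unpair.2 := by
  constructor
  · rintro ⟨q, rfl⟩
    rw [encode_rat_eq_pair, Nat.unpair_pair, ← natAbs_eq_encode]
    exact ⟨q.den_pos, q.reduced⟩
  · rintro ⟨hpos, hcoprime⟩
    refine ⟨⟨Denumerable.ofNat ℤ k.unpair.1, k.unpair.2, hpos.ne', ?_⟩, ?_⟩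
    · rwa [natAbs_eq_encode, Denumerable.encode_ofNat]
    · exact (congrArg (Nat.pair · _) (Denumerable.encode_ofNat _)).trans (Nat.pair_unpair k)

theorem primrecPred_mem_range_encode_rat :
    PrimrecPred (· ∈ Set.range Rat.instEncodable.encode) :=
  (primrecRel_pos_and_coprime.comp
    (Primrec.nat_div.comp (Primrec.succ.comp (Primrec.fst.comp Primrec.unpair)) (Primrec.const 2))
    (Primrec.snd.comp Primrec.unpair)).of_eq fun k ↦ (mem_range_encode_rat_iff k).symm

theorem computable_encode_rat : Computable Rat.instEncodable.encode :=
  computable_encode_ofEncodableOfInfinite primrecPred_mem_range_encode_rat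

theorem computable_rat_num : Computable Rat.num :=
  ((Computable.ofNat ℤ).comp
    (Computable.fst.comp (Computable.unpair.comp computable_encode_rat))).of_eq fun q ↦ by
      rw [encode_rat_eq_pair, Nat.unpair_pair, Denumerable.ofNat_encode]

theorem computable_rat_den : Computable Rat.den :=
  (Computable.snd.comp (Computable.unpair.comp computable_encode_rat)).of_eq fun q ↦ by
    rw [encode_rat_eq_pair, Nat.unpair_pair]

theorem rat_add_eq_iff (a b c : ℚ) :
    a + b = c ↔ (a.num * b.den + b.num * a.den) * c.den = c.num * (a.den * b.den) := by
  conv_lhs => rw [← a.num_div_den, ← b.num_div_den, ← c.num_div_den]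
  have ha : (a.den : ℚ) ≠ 0 := mod_cast a.den_ne_zero
  have hb : (b.den : ℚ) ≠ 0 := mod_cast b.den_ne_zero
  have hc : (c.den : ℚ) ≠ 0 := mod_cast c.den_ne_zero
  rw [div_add_div _ _ ha hb, div_eq_div_iff (mul_ne_zero ha hb) hc, mul_comm (a.den : ℚ) b.num]
  norm_cast

theorem rat_mul_eq_iff (a b c : ℚ) :
    a * b = c ↔ a.num * b.num * c.den = c.num * (a.den * b.den) := by
  conv_lhs => rw [← a.num_div_den, ← b.num_div_den, ← c.num_div_den]
  have ha : (a.den : ℚ) ≠ 0 := mod_cast a.den_ne_zero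
  have hb : (b.den : ℚ) ≠ 0 := mod_cast b.den_ne_zero
  have hc : (c.den : ℚ) ≠ 0 := mod_cast c.den_ne_zero
  rw [div_mul_div_comm, div_eq_div_iff (mul_ne_zero ha hb) hc]
  norm_cast

section Arithmetic

variable {α : Type*} [Primcodable α]

theorem computable_int_mul {f g : α → ℤ} (hf : Computable f) (hg : Computable g) :
    Computable fun a ↦ f a * g a :=
  primrec_int_mul.to_comp.comp hf hg

theorem computable_rat_den_cast {f : α → ℚ} (hf : Computable f) :
    Computable fun a ↦ ((f a).den : ℤ) :=
  primrec_int_natCast.to_comp.comp (computable_rat_den.comp hf)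

theorem computablePred_eq {β : Type*} [Primcodable β] {f g : α → β} (hf : Computable f)
    (hg : Computable g) : ComputablePred fun a ↦ f a = g a := by
  classical
  exact Computable.computablePred (Primrec.eq.decide.to_comp.comp hf hg)

end Arithmetic

theorem computable_rat_add : Computable₂ fun a b : ℚ ↦ a + b := by
  have hfst : Computable fun p : (ℚ × ℚ) × ℚ ↦ p.1.1 := Computable.fst.comp Computable.fst
  have hsnd : Computable fun p : (ℚ × ℚ) × ℚ ↦ p.1.2 := Computable.snd.comp Computable.fst
  refine computable_of_graph ((computablePred_eq ?_ ?_).of_eq fun p ↦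
    (rat_add_eq_iff p.1.1 p.1.2 p.2).symm)
  · exact computable_int_mul (primrec_int_add.to_comp.comp
      (computable_int_mul (computable_rat_num.comp hfst) (computable_rat_den_cast hsnd))
      (computable_int_mul (computable_rat_num.comp hsnd) (computable_rat_den_cast hfst)))
      (computable_rat_den_cast Computable.snd)
  · exact computable_int_mul (computable_rat_num.comp Computable.snd)
      (computable_int_mul (computable_rat_den_cast hfst) (computable_rat_den_cast hsnd))

theorem computable_rat_mul : Computable₂ fun a b : ℚ ↦ a * b := by
  have hfst : Computable fun p : (ℚ × ℚ) × ℚ ↦ p.1.1 := Computable.fst.comp Computable.fst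
  have hsnd : Computable fun p : (ℚ × ℚ) × ℚ ↦ p.1.2 := Computable.snd.comp Computable.fst
  refine computable_of_graph ((computablePred_eq ?_ ?_).of_eq fun p ↦
    (rat_mul_eq_iff p.1.1 p.1.2 p.2).symm)
  · exact computable_int_mul (computable_int_mul (computable_rat_num.comp hfst)
      (computable_rat_num.comp hsnd)) (computable_rat_den_cast Computable.snd)
  · exact computable_int_mul (computable_rat_num.comp Computable.snd)
      (computable_int_mul (computable_rat_den_cast hfst) (computable_rat_den_cast hsnd))

end Rat

section Vectors

variable {α : Type*} [Primcodable α]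

theorem computable_pi {β : Type*} [Primcodable β] {m : ℕ} {f : α → Fin m → β}
    (hf : ∀ i, Computable fun a ↦ f a i) : Computable f := by
  have hget : Computable fun v : List.Vector β m ↦ v.get :=
    (Primrec.fin_curry.2 Primrec.vector_get).to_comp
  exact (hget.comp (Computable.vector_ofFn hf)).of_eq fun a ↦ funext fun i ↦ by simp

theorem computable_pi_apply {β : Type*} [Primcodable β] {m : ℕ} {f : α → Fin m → β}
    (hf : Computable f) (i : Fin m) : Computable fun a ↦ f a i :=
  Computable.fin_app.comp hf (Computable.const i)

theorem computable_finset_sum {β ι : Type*} [Primcodable β] [AddCommMonoid β]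
    (hadd : Computable₂ fun b c : β ↦ b + c) (s : Finset ι) {f : ι → α → β}
    (hf : ∀ i, Computable (f i)) : Computable fun a ↦ ∑ i ∈ s, f i a := by
  classical
  induction s using Finset.induction_on with
  | empty => simpa only [Finset.sum_empty] using Computable.const 0
  | insert i s hi ih =>
    simp only [Finset.sum_insert hi]
    exact hadd.comp (hf i) ih

open Matrix

theorem computable_mulVec {m n : ℕ} {M : α → Matrix (Fin m) (Fin n) ℚ} {v : α → Fin n → ℚ}
    (hM : ∀ i j, Computable fun a ↦ M a i j) (hv : Computable v) :
    Computable fun a ↦ M a *ᵥ v a :=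
  computable_pi fun i ↦ computable_finset_sum computable_rat_add _ fun j ↦
    computable_rat_mul.comp (hM i j) (computable_pi_apply hv j)

theorem computable_pow_mulVec {d : ℕ} {M : α → Matrix (Fin d) (Fin d) ℚ} {x : α → Fin d → ℚ}
    {n : α → ℕ} (hM : ∀ i j, Computable fun a ↦ M a i j) (hx : Computable x) (hn : Computable n) :
    Computable fun a ↦ M a ^ n a *ᵥ x a := by
  have hstep : Computable₂ fun (a : α) (p : ℕ × (Fin d → ℚ)) ↦ M a *ᵥ p.2 :=
    computable_mulVec (M := fun q : α × ℕ × (Fin d → ℚ) ↦ M q.1)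
      (fun i j ↦ (hM i j).comp Computable.fst) (Computable.snd.comp Computable.snd)
  refine (Computable.nat_rec hn hx hstep).of_eq fun a ↦ ?_
  induction n a with
  | zero => simp
  | succ k ih => simp only [ih, mulVec_mulVec, pow_succ']

theorem computable_ratHeight : Computable ratHeight :=
  Primrec.nat_max.to_comp.comp (primrec_int_natAbs.to_comp.comp computable_rat_num)
    computable_rat_den

theorem computable_sum_ratHeight {d : ℕ} {a : α → Fin d → ℚ} (ha : Computable a) :
    Computable fun t ↦ ∑ i, ratHeight (a t i) :=
  computable_finset_sum Primrec.nat_add.to_comp _ fun i ↦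
    computable_ratHeight.comp (computable_pi_apply ha i)

end Vectors

/-! ### Decidability -/

section Decision

open Matrix

theorem computable_krylov {α : Type*} [Primcodable α] {d : ℕ}
    {M : α → Matrix (Fin d) (Fin d) ℚ} {x : α → Fin d → ℚ}
    (hM : ∀ i j, Computable fun a ↦ M a i j) (hx : Computable x) (i j : Fin d) :
    Computable fun a ↦ krylov (M a) (x a) i j :=
  computable_pi_apply (computable_pow_mulVec hM hx (Computable.const (j : ℕ))) i

/-- The triples `(M, x, y)` that are the instances of the Orbit Problem in dimension `d`. -/
abbrev OrbitInstance (d : ℕ) : Type := (Fin d → Fin d → ℚ) × (Fin d → ℚ) × (Fin d → ℚ)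

variable {d : ℕ} {α : Type*} [Primcodable α] {T : α → OrbitInstance d}

theorem computable_matrix_entry (hT : Computable T) (i j : Fin d) :
    Computable fun a ↦ of (T a).1 i j :=
  computable_pi_apply (computable_pi_apply (Computable.fst.comp hT) i) j

theorem computablePred_krylov_normal_equation :
    ComputablePred fun p : OrbitInstance d × (Fin d → ℚ) ↦
      (krylov (of p.1.1) p.1.2.1)ᵀ *ᵥ krylov (of p.1.1) p.1.2.1 *ᵥ p.2 =
        (krylov (of p.1.1) p.1.2.1)ᵀ *ᵥ p.1.2.2 := by
  have hvec : Computable fun p : OrbitInstance d × (Fin d → ℚ) ↦ p.1.2 :=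
    Computable.snd.comp Computable.fst
  have hkrylov := computable_krylov (computable_matrix_entry (d := d) Computable.fst)
    (Computable.fst.comp hvec)
  exact computablePred_eq
    (computable_mulVec (fun i j ↦ hkrylov j i) (computable_mulVec hkrylov Computable.snd))
    (computable_mulVec (fun i j ↦ hkrylov j i) (Computable.snd.comp hvec))

theorem exists_computable_normal_equation (d : ℕ) :
    ∃ a : OrbitInstance d → Fin d → ℚ, Computable a ∧ ∀ T,
      (krylov (of T.1) T.2.1)ᵀ *ᵥ krylov (of T.1) T.2.1 *ᵥ a T =
        (krylov (of T.1) T.2.1)ᵀ *ᵥ T.2.2 := by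
  have hsolvable := fun T : OrbitInstance d ↦
    exists_normal_equation (krylov (of T.1) T.2.1) T.2.2
  exact exists_computable_choice computablePred_krylov_normal_equation hsolvable

theorem computablePred_pow_mulVec_eq :
    ComputablePred fun p : OrbitInstance d × ℕ ↦ of p.1.1 ^ p.2 *ᵥ p.1.2.1 = p.1.2.2 := by
  have hvec : Computable fun p : OrbitInstance d × ℕ ↦ p.1.2 := Computable.snd.comp Computable.fst
  exact computablePred_eq
    (computable_pow_mulVec (computable_matrix_entry Computable.fst) (Computable.fst.comp hvec)
      Computable.snd)
    (Computable.snd.comp hvec)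

theorem exists_reachability_time_bound (d : ℕ) :
    ∃ B : ℕ, ∀ (M : Matrix (Fin d) (Fin d) ℚ) (x y a : Fin d → ℚ) (n : ℕ),
      (krylov M x)ᵀ *ᵥ krylov M x *ᵥ a = (krylov M x)ᵀ *ᵥ y → M ^ n *ᵥ x = y →
        ∃ k ≤ B * (∑ i, ratHeight (a i) + 1), M ^ k *ᵥ x = y := by
  obtain ⟨B, hB⟩ := exists_orbit_time_bound (Fin d → ℚ)
  refine ⟨B, fun M x y a n hnormal hn ↦ ?_⟩
  have hpow (k : ℕ) : (toLin' M ^ k) x = M ^ k *ᵥ x := by rw [← toLin'_pow, toLin'_apply]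
  have haeval : aeval (toLin' M) (ofFn d a) x = aeval M (ofFn d a) *ᵥ x :=
    LinearMap.congr_fun (aeval_algHom_apply toLinAlgEquiv' M (ofFn d a)) x
  have hcoeff : (fun i : Fin d ↦ (ofFn d a).coeff i) = a :=
    funext fun i ↦ ofFn_coeff_eq_val_of_lt a i.2
  have hr : M ^ n *ᵥ x = aeval M (ofFn d a) *ᵥ x := by
    obtain ⟨b, hb⟩ := exists_krylov_mulVec_eq_pow_mulVec M x n
    rw [← krylov_mulVec_coeff M x (ofFn_degree_lt a), hcoeff, ← hb]
    exact (mulVec_eq_of_normal_equation (by rw [hnormal, hb, hn])).symm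
  have hdeg : (ofFn d a).natDegree ≤ Module.finrank ℚ (Fin d → ℚ) := by
    rw [Module.finrank_fin_fun]
    exact natDegree_le_of_degree_le (ofFn_degree_lt a).le
  have hheight (i : ℕ) : ratHeight ((ofFn d a).coeff i) ≤ ∑ i, ratHeight (a i) + 1 := by
    rcases lt_or_ge i d with hi | hi
    · rw [ofFn_coeff_eq_val_of_lt a hi]
      exact (Finset.single_le_sum (f := fun i ↦ ratHeight (a i)) (fun _ _ ↦ zero_le)
        (Finset.mem_univ _)).trans (Nat.le_succ _)
    · rw [ofFn_coeff_eq_zero_of_ge a hi]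
      exact Nat.le_add_left 1 _
  obtain ⟨k, hk, hkn⟩ := hB (toLin' M) x _ n _ hdeg hheight (by rw [hpow, haeval, hr])
  exact ⟨k, hk, by rw [← hpow, hkn, hpow, hn]⟩

end Decision

end OrbitProblem

open OrbitProblem

/-- **Kannan–Lipton Orbit Problem is decidable.**  For each `d ≥ 1`, the predicate
on triples `(M, x, y)` (a rational `d × d` matrix and rational vectors) asking
whether `∃ n, Mⁿx = y` is computable: there is a computable Boolean-valued
function deciding it (this is exactly `ComputablePred`). -/
theorem orbit_problem_decidable (d : ℕ) (hd : 1 ≤ d) :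
    ComputablePred fun T : (Fin d → Fin d → ℚ) × (Fin d → ℚ) × (Fin d → ℚ) =>
      ∃ n : ℕ, ((Matrix.of T.1) ^ n).mulVec T.2.1 = T.2.2 := by
  obtain ⟨B, hB⟩ := exists_reachability_time_bound d
  obtain ⟨a, ha, hnormal⟩ := exists_computable_normal_equation d
  have hbound : Computable fun T ↦ B * (∑ i, ratHeight (a T i) + 1) :=
    Primrec.nat_mul.to_comp.comp (Computable.const B)
      (Computable.succ.comp (computable_sum_ratHeight ha))
  exact computablePred_exists_of_bound computablePred_pow_mulVec_eq hbound
    fun T n ↦ hB _ _ _ _ n (hnormal T)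
end
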